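/- With the conductor setup for a true triple g of degree d: (a) the ring A/c is 1-dimensional Cohen–Macaulay of multiplicity binom(d−1, 2); (b) the ring V/c is 1-dimensional Cohen–Macaulay of multiplicity (d−1)(d−2); and (c) the extended ideal cB equals c_g · (x,y)^{d−2} for some homogeneous form c_g ∈ B of degree (d−1)(d−2). -/

import Mathlib

set_option maxHeartbeats 1000000
set_option synthInstance.maxHeartbeats 1000000

open MvPolynomial

/-- The height of an ideal: the infimum of the heights of the primes containing it. -/
noncomputable def idealHeight {R : Type*} [CommRing R] (I : Ideal R) : ℕ∞ :=
  ⨅ (P : PrimeSpectrum R) (_ : I ≤ P.asIdeal), Order.height P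

/-- `e` is the Hilbert–Samuel multiplicity of the ideal `J` on the (one-dimensional) ring `R`,
characterized as the limit of `λ(R/Jⁿ)/n`; lengths are expressed as Krull dimensions of
submodule lattices. -/
def IsHSMultOfDimOne (R : Type*) [CommRing R] (J : Ideal R) (e : ℕ) : Prop :=
  ∃ len : ℕ → ℕ,
    (∀ n : ℕ, Order.krullDim (Submodule R (R ⧸ J ^ n)) = ((len n : ℕ∞) : WithBot ℕ∞)) ∧
    Filter.Tendsto (fun n : ℕ => (len n : ℝ) / (n : ℝ)) Filter.atTop (nhds (e : ℝ))

/-- The coordinate ring `A = k[g₁,g₂,g₃]`. -/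
noncomputable def coneRing {k : Type*} [Field k] (g : Fin 3 → MvPolynomial (Fin 2) k) :
    Subalgebra k (MvPolynomial (Fin 2) k) :=
  Algebra.adjoin k (Set.range g)

/-- The generators `g i`, as elements of `A = k[g₁,g₂,g₃]`. -/
noncomputable def coneGen {k : Type*} [Field k] (g : Fin 3 → MvPolynomial (Fin 2) k)
    (i : Fin 3) : coneRing g :=
  ⟨g i, Algebra.subset_adjoin ⟨i, rfl⟩⟩

/-- The `d`-th Veronese subring `V = k[B_d]` of `B = k[x,y]`. -/
noncomputable def veronese (k : Type*) [Field k] (d : ℕ) :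
    Subalgebra k (MvPolynomial (Fin 2) k) :=
  Algebra.adjoin k {f : MvPolynomial (Fin 2) k | f.IsHomogeneous d}

open MvPolynomial

section basics
variable {k : Type*} [Field k]

attribute [local instance] MvPolynomial.gradedAlgebra

lemma decompose_eq_hc (f : MvPolynomial (Fin 2) k) (n : ℕ) :
    ((DirectSum.decompose (homogeneousSubmodule (Fin 2) k) f n : homogeneousSubmodule (Fin 2) k n) :
      MvPolynomial (Fin 2) k) = homogeneousComponent n f :=
  decomposition.decompose'_apply f n

lemma hc_mul_left {f w : MvPolynomial (Fin 2) k} {e : ℕ} (hf : f.IsHomogeneous e) (n : ℕ) :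
    homogeneousComponent (e + n) (f * w) = f * homogeneousComponent n w := by
  rw [← decompose_eq_hc, ← decompose_eq_hc]
  exact DirectSum.coe_decompose_mul_add_of_left_mem (homogeneousSubmodule (Fin 2) k) hf

lemma hc_mul_left_lt {f w : MvPolynomial (Fin 2) k} {e n : ℕ} (hf : f.IsHomogeneous e)
    (h : n < e) : homogeneousComponent n (f * w) = 0 := by
  rw [← decompose_eq_hc]
  exact DirectSum.coe_decompose_mul_of_left_mem_of_not_le
    (homogeneousSubmodule (Fin 2) k) hf (not_le.mpr h)

lemma hc_of_hom {f : MvPolynomial (Fin 2) k} {m : ℕ} (hf : f.IsHomogeneous m) (n : ℕ) :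
    homogeneousComponent n f = if n = m then f else 0 :=
  homogeneousComponent_of_mem hf

lemma dvd_hc {f v : MvPolynomial (Fin 2) k} {e : ℕ} (hf : f.IsHomogeneous e) (h : f ∣ v) (n : ℕ) :
    f ∣ homogeneousComponent n v := by
  obtain ⟨w, rfl⟩ := h
  by_cases hn : n < e
  · rw [hc_mul_left_lt hf hn]; exact dvd_zero _
  · obtain ⟨m, rfl⟩ := Nat.exists_eq_add_of_le (not_lt.mp hn)
    rw [hc_mul_left hf]; exact dvd_mul_right _ _

/-- cofactor of a form in a form -/
lemma exists_hom_cofactor {f v : MvPolynomial (Fin 2) k} {e n : ℕ} (hf : f.IsHomogeneous e)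
    (hv : v.IsHomogeneous (e + n)) (h : f ∣ v) :
    ∃ w : MvPolynomial (Fin 2) k, w.IsHomogeneous n ∧ v = f * w := by
  obtain ⟨w, rfl⟩ := h
  refine ⟨homogeneousComponent n w, homogeneousComponent_isHomogeneous _ _, ?_⟩
  rw [← hc_mul_left hf, homogeneousComponent_eq_self hv]

lemma sum_hc_of_le (f : MvPolynomial (Fin 2) k) (N : ℕ) (hN : f.totalDegree < N) :
    ∑ i ∈ Finset.range N, homogeneousComponent i f = f := by
  conv_rhs => rw [← sum_homogeneousComponent f]
  symm
  apply Finset.sum_subset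
  · intro i hi; simp only [Finset.mem_range] at *; omega
  · intro i _ hi
    apply homogeneousComponent_eq_zero
    simp only [Finset.mem_range] at *; omega

lemma ext_hc {f g : MvPolynomial (Fin 2) k}
    (h : ∀ n, homogeneousComponent n f = homogeneousComponent n g) : f = g := by
  have h1 := sum_hc_of_le f (f.totalDegree + g.totalDegree + 1) (by omega)
  have h2 := sum_hc_of_le g (f.totalDegree + g.totalDegree + 1) (by omega)
  rw [← h1, Finset.sum_congr rfl fun i _ => h i, h2]

/-- forms -/
abbrev Hf (k : Type*) [Field k] (n : ℕ) : Submodule k (MvPolynomial (Fin 2) k) :=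
  homogeneousSubmodule (Fin 2) k n

instance Hf_fin (n : ℕ) : Module.Finite k (Hf k n) :=
  Module.Finite.iff_fg.mpr (homogeneousSubmodule_fg (Fin 2) k n)

lemma finrank_Hf (n : ℕ) : Module.finrank k (Hf k n) = n + 1 := by
  classical
  have e : Hf k n = restrictSupport k {d : Fin 2 →₀ ℕ | d.degree = n} := by
    ext p
    rw [mem_homogeneousSubmodule, mem_restrictSupport_iff]
    constructor
    · intro h s hs; exact h.degree_eq_sum_deg_support (by simpa using hs) |>.symm ▸ by
        simp [Finsupp.degree_apply]
    · intro h s hs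
      have := h (show s ∈ (p.support : Set _) by simpa using hs)
      rw [← this, Finsupp.degree_eq_weight_one]; rfl
  rw [e, Module.finrank_eq_nat_card_basis (basisRestrictSupport k _)]
  rw [← Finset.Nat.card_antidiagonal n, ← Nat.card_eq_finsetCard]
  refine Nat.card_congr ⟨fun s => ⟨(s.1 0, s.1 1), ?_⟩,
    fun p => ⟨Finsupp.single 0 p.1.1 + Finsupp.single 1 p.1.2, ?_⟩, ?_, ?_⟩
  · have := s.2
    simp only [Set.mem_ofPred_eq, Finsupp.degree_eq_sum, Fin.sum_univ_two] at this
    simpa using this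
  · have := Finset.HasAntidiagonal.mem_antidiagonal.mp p.2
    simp [this]
  · rintro ⟨s, hs⟩
    ext i
    fin_cases i <;> simp
  · rintro ⟨p, hp⟩
    simp

lemma Hf_mul {f w : MvPolynomial (Fin 2) k} {m n N : ℕ} (hf : f.IsHomogeneous m)
    (hw : w.IsHomogeneous n) (h : m + n = N) : (f * w).IsHomogeneous N := h ▸ hf.mul hw

lemma Hf_split {v : MvPolynomial (Fin 2) k} {n : ℕ} (hv : v.IsHomogeneous (n + 1)) :
    ∃ a b : MvPolynomial (Fin 2) k, a.IsHomogeneous n ∧ b.IsHomogeneous n ∧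
      v = X 0 * a + X 1 * b := by
  have h : v ∈ homogeneousSubmodule (Fin 2) k 1 ^ (n + 1) := by
    rw [homogeneousSubmodule_one_pow]; exact hv
  rw [pow_succ', homogeneousSubmodule_one_pow] at h
  refine Submodule.mul_induction_on h ?_ ?_
  · intro l hl w hw
    rw [homogeneousSubmodule_one_eq_span_X] at hl
    have : l ∈ Submodule.span k {(X 0 : MvPolynomial (Fin 2) k), X 1} := by
      have e : Set.range (X : Fin 2 → MvPolynomial (Fin 2) k) = {X 0, X 1} := by
        ext z; simp [eq_comm]
      rw [← e]; exact hl
    obtain ⟨a, b, rfl⟩ := Submodule.mem_span_pair.mp this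
    refine ⟨a • w, b • w, Submodule.smul_mem (Hf k n) a hw, Submodule.smul_mem (Hf k n) b hw, ?_⟩
    simp only [add_mul, smul_mul_assoc, mul_smul_comm]
  · rintro _ _ ⟨a, b, ha, hb, rfl⟩ ⟨a', b', ha', hb', rfl⟩
    exact ⟨a + a', b + b', ha.add ha', hb.add hb', by ring⟩

/-- two coprime forms of degree `d` generate all forms of degree at least `2d-1` -/
lemma coprime_span {d : ℕ} (hd : 1 ≤ d) {f₁ f₂ : MvPolynomial (Fin 2) k}
    (h₁ : f₁.IsHomogeneous d) (h₂ : f₂.IsHomogeneous d) (hc : IsRelPrime f₁ f₂)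
    (hz : f₁ ≠ 0) (hz2 : f₂ ≠ 0) (n : ℕ) :
    ∀ v : MvPolynomial (Fin 2) k, v.IsHomogeneous (d - 1 + n + d) →
      ∃ a b : MvPolynomial (Fin 2) k, a.IsHomogeneous (d - 1 + n) ∧ b.IsHomogeneous (d - 1 + n) ∧
        v = f₁ * a + f₂ * b := by
  induction n with
  | zero =>
    intro v hv
    let T : (Hf k (d - 1) × Hf k (d - 1)) →ₗ[k] Hf k (d - 1 + d) :=
      LinearMap.codRestrict _
        (((LinearMap.mulLeft k f₁).comp ((Hf k (d-1)).subtype.comp (LinearMap.fst k _ _))) +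
        ((LinearMap.mulLeft k f₂).comp ((Hf k (d-1)).subtype.comp (LinearMap.snd k _ _)))) (by
          rintro ⟨a, b⟩
          exact (Hf_mul h₁ a.2 (by omega)).add (Hf_mul h₂ b.2 (by omega)))
    have hT : Function.Injective T := by
      rw [injective_iff_map_eq_zero]
      rintro ⟨⟨a, ha⟩, ⟨b, hb⟩⟩ h
      have h' : f₁ * a + f₂ * b = 0 := congrArg Subtype.val h
      have hda : f₂ ∣ a := by
        refine hc.symm.dvd_of_dvd_mul_left (x := f₂) (y := f₁) (z := a) ⟨-b, by linear_combination h'⟩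
      have ha0 : a = 0 := by
        by_contra hne
        obtain ⟨c, rfl⟩ := hda
        have hc0 : c ≠ 0 := right_ne_zero_of_mul hne
        have := ((mem_homogeneousSubmodule _ _).mp ha).totalDegree hne
        rw [totalDegree_mul_of_isDomain hz2 hc0, h₂.totalDegree hz2] at this
        omega
      subst ha0
      have : b = 0 := by simpa [hz2] using h'
      subst this
      rfl
    have hs : Function.Surjective T := by
      refine (LinearMap.injective_iff_surjective_of_finrank_eq_finrank ?_).mp hT
      rw [Module.finrank_prod, finrank_Hf, finrank_Hf]; omega
    obtain ⟨⟨a, b⟩, hab⟩ := hs ⟨v, hv⟩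
    exact ⟨a, b, a.2, b.2, (congrArg Subtype.val hab).symm⟩
  | succ n ih =>
    intro v hv
    obtain ⟨p, q, hp, hq, rfl⟩ := Hf_split (n := d - 1 + n + d) (by convert hv using 1; omega)
    obtain ⟨a, b, ha, hb, rfl⟩ := ih p hp
    obtain ⟨a', b', ha', hb', rfl⟩ := ih q hq
    have e : 1 + (d - 1 + n) = d - 1 + (n + 1) := by omega
    refine ⟨X 0 * a + X 1 * a', X 0 * b + X 1 * b',
      (Hf_mul (isHomogeneous_X _ _) ha e).add (Hf_mul (isHomogeneous_X _ _) ha' e),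
      (Hf_mul (isHomogeneous_X _ _) hb e).add (Hf_mul (isHomogeneous_X _ _) hb' e), by ring⟩

lemma dim_B_three {P₀ P₁ P₂ P₃ : PrimeSpectrum (MvPolynomial (Fin 2) k)} (h₁ : P₀ < P₁)
    (h₂ : P₁ < P₂) (h₃ : P₂ < P₃) : False := by
  have h : ringKrullDim (MvPolynomial (Fin 2) k) = 2 := by
    rw [MvPolynomial.ringKrullDim_of_isNoetherianRing, ringKrullDim_eq_zero_of_field]; simp
  let p : LTSeries (PrimeSpectrum (MvPolynomial (Fin 2) k)) :=
    { length := 3, toFun := ![P₀, P₁, P₂, P₃], step := by intro i; fin_cases i <;> assumption }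
  have := Order.LTSeries.length_le_krullDim p
  change _ ≤ ringKrullDim _ at this
  rw [h] at this
  have h3 : ((3 : ℕ) : WithBot ℕ∞) ≤ ((2 : ℕ) : WithBot ℕ∞) := this
  rw [Nat.cast_le] at h3
  omega

noncomputable def Mxy (k : Type*) [Field k] : Ideal (MvPolynomial (Fin 2) k) :=
  Ideal.span {(X 0 : MvPolynomial (Fin 2) k), X 1}

lemma X_not_dvd_X : ¬ (X 0 : MvPolynomial (Fin 2) k) ∣ X 1 := by
  rw [X_dvd_X]; simp

lemma mem_Mxy {f : MvPolynomial (Fin 2) k} (h : homogeneousComponent 0 f = 0) : f ∈ Mxy k := by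
  rw [← sum_hc_of_le f _ (Nat.lt_succ_self _)]
  refine Ideal.sum_mem _ fun i _ => ?_
  rcases i with _ | i
  · rw [h]; exact zero_mem _
  · obtain ⟨a, b, -, -, e⟩ := Hf_split (homogeneousComponent_isHomogeneous (i + 1) f)
    rw [e]
    exact Ideal.mem_span_pair.mpr ⟨a, b, by ring⟩

lemma Mxy_prime : (Mxy k).IsPrime := by
  have : Mxy k = RingHom.ker (constantCoeff : MvPolynomial (Fin 2) k →+* k) := by
    apply le_antisymm
    · rw [Mxy, Ideal.span_le]; rintro x (rfl | rfl) <;> simp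
    · intro f hf
      apply mem_Mxy
      rw [homogeneousComponent_zero]
      have : coeff 0 f = 0 := hf
      rw [this, C_0]
  rw [this]
  exact RingHom.ker_isPrime _

/-- Homogeneous ideal without a common homogeneous factor contains a power of `(x,y)`. -/
lemma lemma_P (I : Ideal (MvPolynomial (Fin 2) k))
    (hI : I.IsHomogeneous (homogeneousSubmodule (Fin 2) k)) (h0 : I ≠ ⊥)
    (h : ∀ p : MvPolynomial (Fin 2) k, ∀ m, p.IsHomogeneous m → Prime p →
      ¬ I ≤ Ideal.span {p}) :
    ∃ N, Mxy k ^ N ≤ I := by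
  suffices hs : Mxy k ≤ I.radical by
    obtain ⟨N, hN⟩ := I.exists_radical_pow_le_of_fg I.radical.fg_of_isNoetherianRing
    exact ⟨N, (Ideal.pow_right_mono hs N).trans hN⟩
  rw [Ideal.radical_eq_sInf]
  refine le_sInf ?_
  rintro P ⟨hIP, hP⟩
  have hPc := hP.homogeneousCore (𝒜 := homogeneousSubmodule (Fin 2) k)
  set Q := (P.homogeneousCore (homogeneousSubmodule (Fin 2) k)).toIdeal with hQ
  have hQh : Q.IsHomogeneous (homogeneousSubmodule (Fin 2) k) :=
    (P.homogeneousCore (homogeneousSubmodule (Fin 2) k)).isHomogeneous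
  have hQP : Q ≤ P := Ideal.toIdeal_homogeneousCore_le _ _
  have hIQ : I ≤ Q := by
    rw [← hI.toIdeal_homogeneousCore_eq_self]
    exact Ideal.homogeneousCore_mono _ hIP
  have hQM : Q ≤ Mxy k := by
    intro f hf
    apply mem_Mxy
    have := homogeneousComponent_mem_of_mem hQh hf 0
    rw [homogeneousComponent_zero] at this ⊢
    by_contra hne
    have hu : IsUnit (C (coeff 0 f) : MvPolynomial (Fin 2) k) := by
      apply IsUnit.map
      rw [isUnit_iff_ne_zero]
      rintro h
      exact hne (by rw [h, C_0])
    exact hPc.ne_top (Ideal.eq_top_of_isUnit_mem _ this hu)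
  by_contra hne
  have hlt : Q < Mxy k := lt_of_le_of_ne hQM fun e => hne (e ▸ hQP)
  have hQ0 : Q ≠ ⊥ := fun e => h0 (le_bot_iff.mp (e ▸ hIQ))
  obtain ⟨p, hpQ, hp⟩ := hPc.exists_mem_prime_of_ne_bot hQ0
  have hpp : (Ideal.span {p}).IsPrime := (Ideal.span_singleton_prime hp.ne_zero).mpr hp
  have hle : Ideal.span {p} ≤ Q := (Ideal.span_singleton_le_iff_mem _).mpr hpQ
  have heq : Ideal.span {p} = Q := by
    by_contra hne
    refine dim_B_three (P₀ := ⟨⊥, Ideal.isPrime_bot⟩) (P₁ := ⟨_, hpp⟩) (P₂ := ⟨Q, hPc⟩) (P₃ := ⟨_, Mxy_prime⟩)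
      ?_ (show Ideal.span {p} < Q from lt_of_le_of_ne hle hne) hlt
    change ⊥ < Ideal.span {p}
    rw [bot_lt_iff_ne_bot, Ne, Ideal.span_singleton_eq_bot]
    exact hp.ne_zero
  -- `p` is homogeneous up to a unit
  obtain ⟨m, hm⟩ : ∃ m, homogeneousComponent m p ≠ 0 := by
    by_contra hcon
    push Not at hcon
    exact hp.ne_zero (ext_hc fun n => by rw [hcon, map_zero])
  have h1 : homogeneousComponent m p ∈ Ideal.span {p} := by
    rw [heq]; exact homogeneousComponent_mem_of_mem hQh hpQ m
  obtain ⟨s, hs⟩ := Ideal.mem_span_singleton.mp h1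
  have hs0 : s ≠ 0 := by rintro rfl; simp [hm] at hs
  have hdeg : (homogeneousComponent m p).totalDegree ≤ p.totalDegree := by
    rw [(homogeneousComponent_isHomogeneous m p).totalDegree hm]
    by_contra hcon
    exact hm (homogeneousComponent_eq_zero _ _ (by omega))
  have hs1 : s.totalDegree = 0 := by
    rw [hs, totalDegree_mul_of_isDomain hp.ne_zero hs0] at hdeg; omega
  have hsu : IsUnit s := by
    rw [totalDegree_eq_zero_iff_eq_C] at hs1
    rw [hs1]
    apply IsUnit.map
    rw [isUnit_iff_ne_zero]
    intro h
    rw [hs1, h, C_0] at hs0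
    exact hs0 rfl
  have hass : Associated p (homogeneousComponent m p) := by
    rw [hs]; exact (associated_mul_unit_right p s hsu)
  refine h _ m (homogeneousComponent_isHomogeneous m p) (hass.prime hp) ?_
  rw [← Ideal.span_singleton_eq_span_singleton.mpr hass, heq]
  exact hIQ

end basics


section duality
variable {R V : Type*} [CommRing R] [IsDomain R] [CommRing V] [IsDomain V] [Algebra R V]

/-- `R[y]` as a module, spanned by `1, …, y^(d-1)` -/
abbrev powSpan (R : Type*) {V : Type*} [CommRing R] [CommRing V] [Algebra R V] (d : ℕ) (y : V) :
    Submodule R V :=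
  Submodule.span R (Set.range fun i : Fin d => y ^ (i : ℕ))

lemma mem_powSpan {d : ℕ} {y v : V} :
    v ∈ powSpan R d y ↔ ∃ p : Fin d → R, v = ∑ i, p i • y ^ (i : ℕ) := by
  rw [powSpan, Submodule.mem_span_range_iff_exists_fun]
  exact ⟨fun ⟨p, h⟩ => ⟨p, h.symm⟩, fun ⟨p, h⟩ => ⟨p, h.symm⟩⟩

lemma pow_mem_powSpan {d : ℕ} (b : Module.Basis (Fin d) R V) (y : V) (n : ℕ) :
    y ^ n ∈ powSpan R d y := by
  have : Module.Free R V := Module.Free.of_basis b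
  have : Module.Finite R V := Module.Finite.of_basis b
  let χ := (Algebra.lmul R V y).charpoly
  have hm : χ.Monic := LinearMap.charpoly_monic _
  have hdeg : χ.natDegree = d := by
    rw [LinearMap.charpoly_natDegree, Module.finrank_eq_card_basis b, Fintype.card_fin]
  have h0 : Polynomial.aeval y χ = 0 := by
    have h := LinearMap.aeval_self_charpoly (Algebra.lmul R V y)
    have h2 := Polynomial.aeval_algHom_apply (Algebra.lmul R V) y χ
    rw [h] at h2
    have := congrArg (fun f => f 1) h2
    simpa using this.symm
  have hd : d ≠ 0 := by
    rintro rfl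
    have : Subsingleton V := b.repr.toEquiv.subsingleton
    exact not_subsingleton V this
  have e : y ^ n = Polynomial.aeval y ((Polynomial.X ^ n) %ₘ χ) := by
    have := Polynomial.modByMonic_add_div (Polynomial.X ^ n : Polynomial R) χ
    have h := congrArg (Polynomial.aeval y) this
    simpa [h0] using h.symm
  rw [e, mem_powSpan]
  refine ⟨fun i => ((Polynomial.X ^ n) %ₘ χ).coeff i, ?_⟩
  rw [Polynomial.aeval_eq_sum_range' (n := d), Finset.sum_range]
  have := Polynomial.natDegree_modByMonic_lt (Polynomial.X ^ n : Polynomial R) hm (by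
    intro h; rw [h] at hdeg; simp at hdeg; exact hd hdeg.symm)
  omega

lemma powSpan_mul_mem {d : ℕ} (b : Module.Basis (Fin d) R V) {y u v : V}
    (hu : u ∈ powSpan R d y) (hv : v ∈ powSpan R d y) : u * v ∈ powSpan R d y := by
  obtain ⟨p, rfl⟩ := mem_powSpan.mp hu
  obtain ⟨q, rfl⟩ := mem_powSpan.mp hv
  rw [Finset.sum_mul_sum]
  refine Submodule.sum_mem _ fun i _ => Submodule.sum_mem _ fun j _ => ?_
  rw [smul_mul_smul_comm, ← pow_add]
  exact Submodule.smul_mem _ _ (pow_mem_powSpan b y _)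

lemma smul_inj_of_basis {d : ℕ} (b : Module.Basis (Fin d) R V) {r : R} (hr : r ≠ 0) {u v : V}
    (h : r • u = r • v) : u = v := by
  apply b.repr.injective
  ext i
  have := congrArg (fun w => b.repr w i) h
  simpa [hr] using this

lemma pow_linIndep {d : ℕ} (b : Module.Basis (Fin d) R V) (y : V) {r : R} (hr : r ≠ 0)
    (hrV : ∀ v : V, r • v ∈ powSpan R d y) :
    LinearIndependent R (fun i : Fin d => y ^ (i : ℕ)) := by
  rw [Fintype.linearIndependent_iff]
  intro p hp
  let P : Matrix (Fin d) (Fin d) R := fun i j => b.repr (y ^ (i : ℕ)) j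
  choose Q hQ using fun i => mem_powSpan.mp (hrV (b i))
  have hQP : (Matrix.of Q) * P = r • (1 : Matrix (Fin d) (Fin d) R) := by
    ext i j
    have := congrArg (fun w => b.repr w j) (hQ i)
    simp only [map_smul, map_sum, Finsupp.smul_apply, Module.Basis.repr_self,
      Finsupp.coe_finsetSum, Finset.sum_apply] at this
    rw [Matrix.mul_apply, Matrix.smul_apply, Matrix.one_apply]
    simp only [Matrix.of_apply, P]
    rw [Finsupp.single_apply] at this
    simpa using this.symm
  have hdet : P.det ≠ 0 := by
    intro h0
    have := congrArg Matrix.det hQP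
    rw [Matrix.det_mul, h0, mul_zero, Matrix.det_smul, Matrix.det_one, mul_one] at this
    exact pow_ne_zero _ hr this.symm
  have hv : Matrix.vecMul p P = 0 := by
    ext j
    have := congrArg (fun w => b.repr w j) hp
    simpa [Matrix.vecMul, dotProduct, P] using this
  have := Matrix.eq_zero_of_vecMul_eq_zero hdet hv
  intro i
  rw [this]; rfl

/-- The functional `r·τ`. -/
lemma exists_tau {d : ℕ} (b : Module.Basis (Fin (d + 1)) R V) (y : V) {r : R} (hr : r ≠ 0)
    (hrV : ∀ v : V, r • v ∈ powSpan R (d + 1) y) :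
    ∃ τ : V →ₗ[R] R, (∀ p : Fin (d + 1) → R, τ (∑ i, p i • y ^ (i : ℕ)) = r * p (Fin.last d)) := by
  have hli := pow_linIndep b y hr hrV
  let B := Module.Basis.span hli
  let m : V →ₗ[R] powSpan R (d + 1) y := LinearMap.codRestrict _ (r • LinearMap.id) hrV
  refine ⟨(B.coord (Fin.last d)).comp m, fun p => ?_⟩
  have : m (∑ i, p i • y ^ (i : ℕ)) = ∑ i, (r * p i) • B i := by
    apply Subtype.ext
    simp only [m, LinearMap.codRestrict_apply, LinearMap.smul_apply, LinearMap.id_apply, B,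
      Finset.smul_sum, smul_smul, AddSubmonoidClass.coe_finsetSum]
    refine Finset.sum_congr rfl fun i _ => ?_
    change _ = (r * p i) • ((Module.Basis.span hli i : Submodule.span R _) : V)
    rw [Module.Basis.span_apply]
  rw [LinearMap.comp_apply, this]
  simp [Module.Basis.coord_apply, Finsupp.single_apply]


lemma tau_pow {d : ℕ} {y : V} {r : R} {τ : V →ₗ[R] R}
    (hτ : ∀ p : Fin (d + 1) → R, τ (∑ i, p i • y ^ (i : ℕ)) = r * p (Fin.last d))
    {j : ℕ} (hj : j ≤ d) : τ (y ^ j) = if j = d then r else 0 := by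
  have := hτ (Pi.single ⟨j, by omega⟩ 1)
  rw [Finset.sum_eq_single ⟨j, by omega⟩ (by intro i _ hi; rw [Pi.single_eq_of_ne hi, zero_smul]) (by simp)] at this
  simp only [Pi.single_eq_same, one_smul] at this
  rw [this, Pi.single_apply]
  have e : (Fin.last d = (⟨j, by omega⟩ : Fin (d + 1))) ↔ j = d := by
    rw [Fin.ext_iff]; simp [eq_comm]
  simp [e]

lemma tau_mem {d : ℕ} {y : V} {r : R} {τ : V →ₗ[R] R}
    (hτ : ∀ p : Fin (d + 1) → R, τ (∑ i, p i • y ^ (i : ℕ)) = r * p (Fin.last d))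
    {v : V} (hv : v ∈ powSpan R (d + 1) y) : ∃ s, τ v = r * s := by
  obtain ⟨p, rfl⟩ := mem_powSpan.mp hv
  exact ⟨_, hτ p⟩

lemma tau_exists {d : ℕ} (b : Module.Basis (Fin (d + 1)) R V) {y : V} {r : R} {τ : V →ₗ[R] R}
    (hτ : ∀ p : Fin (d + 1) → R, τ (∑ i, p i • y ^ (i : ℕ)) = r * p (Fin.last d))
    (s : ℕ → R) : ∃ a ∈ powSpan R (d + 1) y, ∀ j ≤ d, τ (a * y ^ j) = r * s j := by
  suffices h : ∀ m ≤ d + 1, ∃ a ∈ powSpan R (d + 1) y, ∀ j < m, τ (a * y ^ j) = r * s j by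
    obtain ⟨a, ha, h⟩ := h (d + 1) le_rfl
    exact ⟨a, ha, fun j hj => h j (by omega)⟩
  intro m
  induction m with
  | zero => intro _; exact ⟨0, zero_mem _, by simp⟩
  | succ m ih =>
    intro hm
    obtain ⟨a, ha, h⟩ := ih (by omega)
    obtain ⟨t, ht⟩ := tau_mem hτ (powSpan_mul_mem b ha (pow_mem_powSpan b y m))
    refine ⟨a + (s m - t) • y ^ (d - m),
      add_mem ha (Submodule.smul_mem _ _ (pow_mem_powSpan b y _)), fun j hj => ?_⟩
    rw [add_mul, smul_mul_assoc, ← pow_add, map_add, map_smul, tau_pow hτ (by omega)]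
    rcases Nat.lt_succ_iff_lt_or_eq.mp hj with hj | rfl
    · rw [h j hj, if_neg (by omega)]; simp
    · rw [ht, if_pos (by omega), smul_eq_mul]; ring

lemma tau_nondeg {d : ℕ} (b : Module.Basis (Fin (d + 1)) R V) {y : V} {r : R} (hr : r ≠ 0)
    (hrV : ∀ v : V, r • v ∈ powSpan R (d + 1) y) {τ : V →ₗ[R] R}
    (hτ : ∀ p : Fin (d + 1) → R, τ (∑ i, p i • y ^ (i : ℕ)) = r * p (Fin.last d))
    {v : V} (h : ∀ j ≤ d, τ (v * y ^ j) = 0) : v = 0 := by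
  obtain ⟨p, hp⟩ := mem_powSpan.mp (hrV v)
  have key : ∀ m, m ≤ d + 1 → ∀ i : Fin (d + 1), d + 1 - m ≤ i → p i = 0 := by
    intro m
    induction m with
    | zero => intro _ i hi; have := i.2; omega
    | succ m ih =>
      intro hm i hi
      by_cases hi' : d + 1 - m ≤ i
      · exact ih (by omega) i hi'
      · have h1 : τ ((r • v) * y ^ m) = 0 := by
          rw [smul_mul_assoc, map_smul, h m (by omega), smul_zero]
        rw [hp, Finset.sum_mul, map_sum, Finset.sum_eq_single i] at h1
        · rw [smul_mul_assoc, ← pow_add, map_smul, tau_pow hτ (by omega), if_pos (by omega)] at h1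
          simpa [hr] using h1
        · intro l _ hl
          rw [smul_mul_assoc, map_smul]
          by_cases hl' : d + 1 - m ≤ l
          · rw [ih (by omega) l hl', zero_smul]
          · have : (l : ℕ) ≠ i := fun e => hl (Fin.ext e)
            rw [← pow_add, tau_pow hτ (by omega), if_neg (by omega), smul_zero]
        · simp
  have h0 : r • v = r • (0 : V) := by
    rw [hp, smul_zero]
    exact Finset.sum_eq_zero fun i _ => by rw [key (d + 1) le_rfl i (by omega), zero_smul]
  exact smul_inj_of_basis b hr h0

lemma tau_dual {d : ℕ} (b : Module.Basis (Fin (d + 1)) R V) {y : V} {r : R} (hr : r ≠ 0)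
    (hrV : ∀ v : V, r • v ∈ powSpan R (d + 1) y) {τ : V →ₗ[R] R}
    (hτ : ∀ p : Fin (d + 1) → R, τ (∑ i, p i • y ^ (i : ℕ)) = r * p (Fin.last d))
    (φ : V →ₗ[R] R) : ∃ a : V, (∀ w : V, a * w ∈ powSpan R (d + 1) y) ∧
      ∀ w : V, τ (a * w) = r * φ w := by
  obtain ⟨a, ha, h⟩ := tau_exists b hτ (fun j => φ (y ^ j))
  have hA : ∀ x ∈ powSpan R (d + 1) y, τ (a * x) = r * φ x := by
    intro x hx
    obtain ⟨p, rfl⟩ := mem_powSpan.mp hx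
    rw [Finset.mul_sum, map_sum, map_sum, Finset.mul_sum]
    refine Finset.sum_congr rfl fun i _ => ?_
    rw [mul_smul_comm, map_smul, map_smul, h i (by omega)]
    simp only [smul_eq_mul]; ring
  have hV : ∀ w, τ (a * w) = r * φ w := by
    intro w
    have := hA _ (hrV w)
    rw [mul_smul_comm, map_smul, map_smul] at this
    exact mul_left_cancel₀ hr this
  refine ⟨a, fun v => ?_, hV⟩
  obtain ⟨u, hu, h'⟩ := tau_exists b hτ (fun j => φ (v * y ^ j))
  have : a * v - u = 0 := by
    apply tau_nondeg b hr hrV hτ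
    intro j hj
    rw [sub_mul, map_sub, h' j hj, mul_assoc, hV, sub_self]
  rw [sub_eq_zero.mp this]
  exact hu

end duality

open MvPolynomial

section graded
variable {k : Type*} [Field k]

/-- adjoin of forms of degree `d` is graded, in degrees multiples of `d` -/
lemma adjoin_graded {s : Set (MvPolynomial (Fin 2) k)} {d : ℕ}
    (hs : ∀ f ∈ s, f.IsHomogeneous d) {v : MvPolynomial (Fin 2) k}
    (hv : v ∈ Algebra.adjoin k s) (n : ℕ) :
    homogeneousComponent n v ∈ Algebra.adjoin k s ∧
      (homogeneousComponent n v ≠ 0 → d ∣ n) := by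
  have hcl : ∀ f ∈ Submonoid.closure s, ∃ m, f.IsHomogeneous (m * d) := by
    intro f hf
    induction hf using Submonoid.closure_induction with
    | mem x hx => exact ⟨1, by simpa using hs x hx⟩
    | one => exact ⟨0, by simpa using isHomogeneous_one _ _⟩
    | mul x y _ _ hx hy =>
      obtain ⟨m, hm⟩ := hx
      obtain ⟨m', hm'⟩ := hy
      exact ⟨m + m', Hf_mul hm hm' (by ring)⟩
  have hv' : v ∈ Submodule.span k (Submonoid.closure s : Set (MvPolynomial (Fin 2) k)) := by
    rw [← Algebra.adjoin_eq_span]; exact hv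
  induction hv' using Submodule.span_induction with
  | mem x hx =>
    obtain ⟨m, hm⟩ := hcl x hx
    rw [hc_of_hom hm]
    split_ifs with h
    · exact ⟨hv, fun _ => ⟨m, by rw [h, mul_comm]⟩⟩
    · exact ⟨zero_mem _, by simp⟩
  | zero => simp [zero_mem]
  | add x y hx hy ihx ihy =>
    have hx' := ihx (by rw [← Subalgebra.mem_toSubmodule, Algebra.adjoin_eq_span]; exact hx)
    have hy' := ihy (by rw [← Subalgebra.mem_toSubmodule, Algebra.adjoin_eq_span]; exact hy)
    rw [map_add]
    refine ⟨add_mem hx'.1 hy'.1, fun h => ?_⟩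
    by_contra hd
    apply h
    rw [not_imp_comm.mp hx'.2 hd, not_imp_comm.mp hy'.2 hd, add_zero]
  | smul a x hx ihx =>
    have hx' := ihx (by rw [← Subalgebra.mem_toSubmodule, Algebra.adjoin_eq_span]; exact hx)
    rw [map_smul]
    refine ⟨Subalgebra.smul_mem _ hx'.1 _, fun h => hx'.2 ?_⟩
    rintro h0
    rw [h0, smul_zero] at h
    exact h rfl

lemma Hf_le_veronese {d m : ℕ} {v : MvPolynomial (Fin 2) k} (hv : v.IsHomogeneous (m * d)) :
    v ∈ veronese k d := by
  have h : v ∈ (homogeneousSubmodule (Fin 2) k d) ^ m := by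
    rw [← homogeneousSubmodule_one_pow, ← pow_mul, homogeneousSubmodule_one_pow, mul_comm]
    exact hv
  have h2 : (homogeneousSubmodule (Fin 2) k d) ^ m ≤ Subalgebra.toSubmodule (veronese k d) := by
    rcases Nat.eq_zero_or_pos m with rfl | hm
    · rw [pow_zero]; exact Submodule.one_le.mpr (one_mem (veronese k d))
    · have h0 : homogeneousSubmodule (Fin 2) k d ≤ Subalgebra.toSubmodule (veronese k d) :=
        fun f hf => Algebra.subset_adjoin hf
      clear h hv
      induction m with
      | zero => rw [pow_zero]; exact Submodule.one_le.mpr (one_mem (veronese k d))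
      | succ m ih =>
        rcases Nat.eq_zero_or_pos m with rfl | hm'
        · rw [zero_add, pow_one]; exact h0
        · rw [pow_succ, Submodule.mul_le]
          intro a ha b hb
          exact (veronese k d).mul_mem (ih hm' ha) (h0 hb)
  exact h2 h

lemma mem_veronese_iff {d : ℕ} {v : MvPolynomial (Fin 2) k} :
    v ∈ veronese k d ↔ ∀ n, homogeneousComponent n v ≠ 0 → d ∣ n := by
  constructor
  · intro h n
    exact (adjoin_graded (fun f hf => hf) h n).2
  · intro h
    rw [← sum_hc_of_le v _ (Nat.lt_succ_self _)]
    refine sum_mem fun n _ => ?_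
    by_cases h0 : homogeneousComponent n v = 0
    · rw [h0]; exact zero_mem _
    · obtain ⟨m, rfl⟩ := h n h0
      exact Hf_le_veronese (m := m) (by rw [mul_comm]; exact homogeneousComponent_isHomogeneous _ _)

/-- components of index `n d` determine elements of the Veronese -/
lemma veronese_ext {d : ℕ} {u v : MvPolynomial (Fin 2) k} (hu : u ∈ veronese k d)
    (hv : v ∈ veronese k d)
    (h : ∀ n, homogeneousComponent (n * d) u = homogeneousComponent (n * d) v) : u = v := by
  apply ext_hc
  intro n
  by_cases hd : d ∣ n
  · obtain ⟨m, rfl⟩ := hd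
    rw [mul_comm]; exact h m
  · rw [not_imp_comm.mp (mem_veronese_iff.mp hu n) hd, not_imp_comm.mp (mem_veronese_iff.mp hv n) hd]

lemma cone_le {g : Fin 3 → MvPolynomial (Fin 2) k} {d : ℕ} (hg : ∀ i, (g i).IsHomogeneous d) :
    coneRing g ≤ veronese k d :=
  Algebra.adjoin_le (by rintro x ⟨i, rfl⟩; exact Algebra.subset_adjoin (hg i))

lemma cone_hc {g : Fin 3 → MvPolynomial (Fin 2) k} {d : ℕ} (hg : ∀ i, (g i).IsHomogeneous d)
    {v : MvPolynomial (Fin 2) k} (hv : v ∈ coneRing g) (n : ℕ) :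
    homogeneousComponent n v ∈ coneRing g :=
  (adjoin_graded (by rintro f ⟨i, rfl⟩; exact hg i) hv n).1

/-- degree `n` part of the cone ring -/
noncomputable def coneN (g : Fin 3 → MvPolynomial (Fin 2) k) (d n : ℕ) :
    Submodule k (MvPolynomial (Fin 2) k) :=
  Subalgebra.toSubmodule (coneRing g) ⊓ Hf k (n * d)

/-- degree `n` part of the conductor -/
noncomputable def condN (g : Fin 3 → MvPolynomial (Fin 2) k) (d n : ℕ) :
    Submodule k (MvPolynomial (Fin 2) k) where
  carrier := {v | v.IsHomogeneous (n * d) ∧ ∀ w ∈ veronese k d, v * w ∈ coneRing g}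
  add_mem' := by
    rintro a b ⟨ha, ha'⟩ ⟨hb, hb'⟩
    exact ⟨ha.add hb, fun w hw => by rw [add_mul]; exact add_mem (ha' w hw) (hb' w hw)⟩
  zero_mem' := ⟨isHomogeneous_zero _ _ _, fun w _ => by rw [zero_mul]; exact zero_mem _⟩
  smul_mem' := by
    rintro c a ⟨ha, ha'⟩
    exact ⟨Submodule.smul_mem (Hf k _) c ha, fun w hw => by
      rw [smul_mul_assoc]; exact Subalgebra.smul_mem _ (ha' w hw) c⟩

instance (g : Fin 3 → MvPolynomial (Fin 2) k) (d n : ℕ) : Module.Finite k (coneN g d n) :=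
  Submodule.finiteDimensional_of_le (inf_le_right : coneN g d n ≤ Hf k (n * d))

lemma condN_le (g : Fin 3 → MvPolynomial (Fin 2) k) (d n : ℕ) : condN g d n ≤ Hf k (n * d) :=
  fun _ h => h.1

instance (g : Fin 3 → MvPolynomial (Fin 2) k) (d n : ℕ) : Module.Finite k (condN g d n) :=
  Submodule.finiteDimensional_of_le (condN_le g d n)

end graded

section core
variable {k : Type*} [Field k]

lemma psi_hom {d : ℕ} {f₁ f₂ : MvPolynomial (Fin 2) k} (h₁ : f₁.IsHomogeneous d)
    (h₂ : f₂.IsHomogeneous d) {q : MvPolynomial (Fin 2) k} {m : ℕ} (hq : q.IsHomogeneous m) :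
    (aeval ![f₁, f₂] q).IsHomogeneous (m * d) := by
  rw [mul_comm]
  exact hq.aeval _ (by intro i; fin_cases i <;> assumption)

lemma hc_psi {d : ℕ} (hd : 1 ≤ d) {f₁ f₂ : MvPolynomial (Fin 2) k} (h₁ : f₁.IsHomogeneous d)
    (h₂ : f₂.IsHomogeneous d) (q : MvPolynomial (Fin 2) k) (m : ℕ) :
    homogeneousComponent (m * d) (aeval ![f₁, f₂] q) =
      aeval ![f₁, f₂] (homogeneousComponent m q) := by
  have h := sum_hc_of_le q (q.totalDegree + m + 1) (by omega)
  conv_lhs => rw [← h]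
  rw [map_sum, map_sum, Finset.sum_eq_single m]
  · rw [hc_of_hom (psi_hom h₁ h₂ (homogeneousComponent_isHomogeneous m q)), if_pos rfl]
  · intro i _ hi
    rw [hc_of_hom (psi_hom h₁ h₂ (homogeneousComponent_isHomogeneous i q)), if_neg]
    intro e
    exact hi (Nat.eq_of_mul_eq_mul_right (by omega) e).symm
  · intro h; simp at h

lemma psi_mem_veronese {d : ℕ} {f₁ f₂ : MvPolynomial (Fin 2) k} (h₁ : f₁.IsHomogeneous d)
    (h₂ : f₂.IsHomogeneous d) (q : MvPolynomial (Fin 2) k) :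
    aeval ![f₁, f₂] q ∈ veronese k d := by
  rw [← sum_hc_of_le q _ (Nat.lt_succ_self _), map_sum]
  exact sum_mem fun i _ => Hf_le_veronese (psi_hom h₁ h₂ (homogeneousComponent_isHomogeneous i q))

lemma hc_psi_mul {d : ℕ} (hd : 1 ≤ d) {f₁ f₂ : MvPolynomial (Fin 2) k} (h₁ : f₁.IsHomogeneous d)
    (h₂ : f₂.IsHomogeneous d) (q w : MvPolynomial (Fin 2) k) {i : ℕ} (hw : w.IsHomogeneous (i * d))
    (m : ℕ) : homogeneousComponent (m * d) (aeval ![f₁, f₂] q * w) =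
      if i ≤ m then aeval ![f₁, f₂] (homogeneousComponent (m - i) q) * w else 0 := by
  split_ifs with h
  · obtain ⟨j, rfl⟩ := Nat.exists_eq_add_of_le h
    rw [mul_comm (aeval ![f₁, f₂] q) w, add_mul, hc_mul_left hw, Nat.add_sub_cancel_left, hc_psi hd h₁ h₂, mul_comm]
  · rw [mul_comm (aeval ![f₁, f₂] q) w, hc_mul_left_lt hw]
    exact Nat.mul_lt_mul_of_pos_right (by omega) (by omega)

/-- complement of `f₁, f₂` in the forms of degree `D+1` -/
lemma exists_compl {D : ℕ} {f₁ f₂ : MvPolynomial (Fin 2) k} (h₁ : f₁.IsHomogeneous (D + 1))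
    (h₂ : f₂.IsHomogeneous (D + 1)) (hli : LinearIndependent k ![f₁, f₂]) :
    ∃ b : Fin D → MvPolynomial (Fin 2) k, (∀ j, (b j).IsHomogeneous (D + 1)) ∧
      ∀ v : MvPolynomial (Fin 2) k, v.IsHomogeneous (D + 1) →
        ∃ (α β : k) (l : Fin D → k), v = α • f₁ + β • f₂ + ∑ j, l j • b j := by
  let F : Fin 2 → Hf k (D + 1) := ![⟨f₁, h₁⟩, ⟨f₂, h₂⟩]
  have hF : LinearIndependent k F := by
    apply LinearIndependent.of_comp (Hf k (D + 1)).subtype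
    convert hli using 1
    ext i : 1
    fin_cases i <;> rfl
  let W := Submodule.span k (Set.range F)
  have hW : Module.finrank k W = 2 := by
    rw [finrank_span_eq_card hF]; simp
  obtain ⟨W', hc⟩ := W.exists_isCompl
  have hW' : Module.finrank k W' = D := by
    have := Submodule.finrank_add_eq_of_isCompl hc
    rw [hW, finrank_Hf] at this
    omega
  have : Module.Free k W' := Module.Free.of_divisionRing k W'
  let b : Module.Basis (Fin D) k W' := Module.finBasisOfFinrankEq k W' hW'
  refine ⟨fun j => ((b j : Hf k (D + 1)) : MvPolynomial (Fin 2) k), fun j => (b j : Hf k (D + 1)).2, fun v hv => ?_⟩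
  obtain ⟨w, w', hww⟩ : ∃ w ∈ W, ∃ w' ∈ W', w + w' = (⟨v, hv⟩ : Hf k (D + 1)) := by
    have : (⟨v, hv⟩ : Hf k (D + 1)) ∈ W ⊔ W' := by rw [hc.sup_eq_top]; trivial
    exact Submodule.mem_sup.mp this
  obtain ⟨hw', e⟩ := hww
  obtain ⟨c, hcw⟩ := (Submodule.mem_span_range_iff_exists_fun k).mp w'
  refine ⟨c 0, c 1, b.repr ⟨hw', e.1⟩, ?_⟩
  have e1 := congrArg Subtype.val e.2
  have e2 := congrArg Subtype.val hcw
  have e3 := congrArg (fun z : W' => ((z : Hf k (D + 1)) : MvPolynomial (Fin 2) k)) (b.sum_repr ⟨hw', e.1⟩)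
  simp only [Fin.sum_univ_two] at e2
  have e1' : (w : MvPolynomial (Fin 2) k) + (hw' : MvPolynomial (Fin 2) k) = v := e1
  refine e1'.symm.trans ?_
  congr 1
  · exact e2.symm
  · refine e3.symm.trans ?_
    rw [AddSubmonoidClass.coe_finsetSum, AddSubmonoidClass.coe_finsetSum]
    rfl

lemma graded_span {D : ℕ} {f₁ f₂ : MvPolynomial (Fin 2) k} (h₁ : f₁.IsHomogeneous (D + 1))
    (h₂ : f₂.IsHomogeneous (D + 1)) (hc : IsRelPrime f₁ f₂) (hz1 : f₁ ≠ 0) (hz2 : f₂ ≠ 0)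
    {b : Fin D → MvPolynomial (Fin 2) k}
    (hb : ∀ v : MvPolynomial (Fin 2) k, v.IsHomogeneous (D + 1) →
        ∃ (α β : k) (l : Fin D → k), v = α • f₁ + β • f₂ + ∑ j, l j • b j) (n : ℕ) :
    ∀ v : MvPolynomial (Fin 2) k, v.IsHomogeneous ((n + 1) * (D + 1)) →
      ∃ (q₀ : Hf k (n + 1)) (q : Fin D → Hf k n),
        v = aeval ![f₁, f₂] q₀.1 + ∑ j, aeval ![f₁, f₂] (q j).1 * b j := by
  induction n with
  | zero =>
    intro v hv
    obtain ⟨α, β, l, rfl⟩ := hb v (by simpa using hv)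
    refine ⟨α • ⟨X 0, isHomogeneous_X _ _⟩ + β • ⟨X 1, isHomogeneous_X _ _⟩,
      fun j => l j • ⟨1, isHomogeneous_one _ _⟩, ?_⟩
    simp
  | succ n ih =>
    intro v hv
    obtain ⟨a, b', ha, hb', rfl⟩ := coprime_span (d := D + 1) (by omega) h₁ h₂ hc hz1 hz2
      (n * (D + 1) + 1) v (by convert hv using 1; simp; ring)
    have e : D + 1 - 1 + (n * (D + 1) + 1) = (n + 1) * (D + 1) := by simp; ring
    rw [e] at ha hb'
    obtain ⟨p₀, p, rfl⟩ := ih a ha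
    obtain ⟨q₀, q, rfl⟩ := ih b' hb'
    refine ⟨⟨X 0 * p₀.1 + X 1 * q₀.1, (Hf_mul (isHomogeneous_X _ _) p₀.2 (by omega)).add
      (Hf_mul (isHomogeneous_X _ _) q₀.2 (by omega))⟩,
      fun j => ⟨X 0 * (p j).1 + X 1 * (q j).1, (Hf_mul (isHomogeneous_X _ _) (p j).2 (by omega)).add
      (Hf_mul (isHomogeneous_X _ _) (q j).2 (by omega))⟩, ?_⟩
    simp only [map_add, map_mul, aeval_X, Matrix.cons_val_zero, Matrix.cons_val_one, add_mul,
      Finset.sum_add_distrib, mul_add, Finset.mul_sum, mul_assoc]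
    ring

lemma graded_inj {D : ℕ} {f₁ f₂ : MvPolynomial (Fin 2) k} (h₁ : f₁.IsHomogeneous (D + 1))
    (h₂ : f₂.IsHomogeneous (D + 1)) (hc : IsRelPrime f₁ f₂) (hz1 : f₁ ≠ 0) (hz2 : f₂ ≠ 0)
    {b : Fin D → MvPolynomial (Fin 2) k} (hbh : ∀ j, (b j).IsHomogeneous (D + 1))
    (hb : ∀ v : MvPolynomial (Fin 2) k, v.IsHomogeneous (D + 1) →
        ∃ (α β : k) (l : Fin D → k), v = α • f₁ + β • f₂ + ∑ j, l j • b j) (n : ℕ)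
    {q₀ : MvPolynomial (Fin 2) k} {q : Fin D → MvPolynomial (Fin 2) k}
    (hq₀ : q₀.IsHomogeneous (n + 1)) (hq : ∀ j, (q j).IsHomogeneous n)
    (h : aeval ![f₁, f₂] q₀ + ∑ j, aeval ![f₁, f₂] (q j) * b j = 0) : q₀ = 0 ∧ ∀ j, q j = 0 := by
  let ψ : MvPolynomial (Fin 2) k →ₗ[k] MvPolynomial (Fin 2) k := (aeval ![f₁, f₂]).toLinearMap
  let T : (Hf k (n + 1) × (Fin D → Hf k n)) →ₗ[k] Hf k ((n + 1) * (D + 1)) :=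
    LinearMap.codRestrict _
      ((ψ ∘ₗ (Hf k (n + 1)).subtype ∘ₗ LinearMap.fst k _ _) +
        ∑ j, (LinearMap.mulRight k (b j)) ∘ₗ ψ ∘ₗ (Hf k n).subtype ∘ₗ (LinearMap.proj j) ∘ₗ
          LinearMap.snd k (Hf k (n + 1)) (Fin D → Hf k n)) (by
        rintro ⟨p₀, p⟩
        rw [LinearMap.add_apply, LinearMap.sum_apply]
        refine add_mem (psi_hom h₁ h₂ p₀.2) (sum_mem fun j _ => ?_)
        exact Hf_mul (psi_hom h₁ h₂ (p j).2) (hbh j) (by ring))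
  have hTa : ∀ p₀ p, ((T (p₀, p) : Hf k ((n + 1) * (D + 1))) : MvPolynomial (Fin 2) k) =
      aeval ![f₁, f₂] p₀.1 + ∑ j, aeval ![f₁, f₂] (p j).1 * b j := by
    intro p₀ p
    simp only [T, LinearMap.codRestrict_apply, LinearMap.add_apply, LinearMap.sum_apply]
    rfl
  have hs : Function.Surjective T := by
    rintro ⟨v, hv⟩
    obtain ⟨p₀, p, e⟩ := graded_span h₁ h₂ hc hz1 hz2 hb n v hv
    exact ⟨(p₀, p), Subtype.ext (by rw [hTa, ← e])⟩
  have hi : Function.Injective T := by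
    refine (LinearMap.injective_iff_surjective_of_finrank_eq_finrank ?_).mpr hs
    rw [Module.finrank_prod, Module.finrank_pi_fintype, finrank_Hf]
    simp only [finrank_Hf, Finset.sum_const, Finset.card_univ, Fintype.card_fin, smul_eq_mul]
    ring
  have h0 : T (⟨q₀, hq₀⟩, fun j => ⟨q j, hq j⟩) = T 0 := by
    apply Subtype.ext
    rw [hTa, map_zero]; exact h
  have := hi h0
  rw [Prod.ext_iff] at this
  exact ⟨congrArg Subtype.val this.1, fun j => congrArg Subtype.val (congrFun this.2 j)⟩

end core

set_option linter.style.haveILetI false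
set_option linter.unusedVariables false
open MvPolynomial

section core2
variable {k : Type*} [Field k]

/-- the Veronese ring as an algebra over `k[f₁,f₂]` -/
noncomputable abbrev veroAlg {d : ℕ} {f₁ f₂ : MvPolynomial (Fin 2) k} (h₁ : f₁.IsHomogeneous d)
    (h₂ : f₂.IsHomogeneous d) : Algebra (MvPolynomial (Fin 2) k) (veronese k d) :=
  ((aeval ![f₁, f₂]).codRestrict (veronese k d) (psi_mem_veronese h₁ h₂)).toRingHom.toAlgebra

lemma vero_smul {d : ℕ} {f₁ f₂ : MvPolynomial (Fin 2) k} (h₁ : f₁.IsHomogeneous d)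
    (h₂ : f₂.IsHomogeneous d) (q : MvPolynomial (Fin 2) k) (v : veronese k d) :
    letI := veroAlg h₁ h₂
    ((q • v : veronese k d) : MvPolynomial (Fin 2) k) = aeval ![f₁, f₂] q * v := by
  rfl

lemma vero_C_smul {d : ℕ} {f₁ f₂ : MvPolynomial (Fin 2) k} (h₁ : f₁.IsHomogeneous d)
    (h₂ : f₂.IsHomogeneous d) (c : k) (v : veronese k d) :
    letI := veroAlg h₁ h₂
    ((C c : MvPolynomial (Fin 2) k) • v : veronese k d) = c • v := by
  letI := veroAlg h₁ h₂
  apply Subtype.ext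
  rw [vero_smul, algHom_C, algebraMap_eq, Subalgebra.coe_smul, smul_eq_C_mul]

lemma linIndep_of_relPrime {D : ℕ} {f₁ f₂ : MvPolynomial (Fin 2) k} (h₁ : f₁.IsHomogeneous (D + 1))
    (hc : IsRelPrime f₁ f₂) (hz1 : f₁ ≠ 0) (hz2 : f₂ ≠ 0) : LinearIndependent k ![f₁, f₂] := by
  have hu : ¬ IsUnit f₁ := by
    intro h
    obtain ⟨c, hc, e⟩ := MvPolynomial.isUnit_iff_eq_C_of_isReduced.mp h
    have := h₁.totalDegree hz1
    rw [e, totalDegree_C] at this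
    omega
  rw [LinearIndependent.pair_iff]
  intro s t hst
  have ht : t = 0 := by
    by_contra ht
    apply hu
    apply hc dvd_rfl
    refine ⟨C (-(t⁻¹ * s)), ?_⟩
    have : f₂ = (-(t⁻¹ * s)) • f₁ := by
      have h2 : t • f₂ = -(s • f₁) := by rw [eq_neg_iff_add_eq_zero, add_comm]; exact hst
      rw [neg_smul, mul_smul, ← smul_neg, ← h2, smul_smul, inv_mul_cancel₀ ht, one_smul]
    rw [mul_comm, ← smul_eq_C_mul]; exact this
  subst ht
  simp only [zero_smul, add_zero, smul_eq_zero, hz1, or_false] at hst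
  exact ⟨hst, rfl⟩

/-- degree of a basis element -/
def degE {D : ℕ} (i : Fin (D + 1)) : ℕ := if i = 0 then 0 else 1

lemma vero_basis {D : ℕ} {f₁ f₂ : MvPolynomial (Fin 2) k} (h₁ : f₁.IsHomogeneous (D + 1))
    (h₂ : f₂.IsHomogeneous (D + 1)) (hc : IsRelPrime f₁ f₂) (hz1 : f₁ ≠ 0) (hz2 : f₂ ≠ 0) :
    letI := veroAlg h₁ h₂
    ∃ β : Module.Basis (Fin (D + 1)) (MvPolynomial (Fin 2) k) (veronese k (D + 1)),
      ∀ i, (β i : MvPolynomial (Fin 2) k).IsHomogeneous (degE i * (D + 1)) := by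
  letI := veroAlg h₁ h₂
  obtain ⟨b, hbh, hb⟩ := exists_compl h₁ h₂ (linIndep_of_relPrime h₁ hc hz1 hz2)
  let b' : Fin D → veronese k (D + 1) := fun j => ⟨b j, Hf_le_veronese (m := 1) (by simpa using hbh j)⟩
  let e : Fin (D + 1) → veronese k (D + 1) := Fin.cons 1 b'
  have hli : LinearIndependent (MvPolynomial (Fin 2) k) e := by
    rw [Fintype.linearIndependent_iff]
    intro p hp
    have hp' : aeval ![f₁, f₂] (p 0) + ∑ j, aeval ![f₁, f₂] (p (Fin.succ j)) * b j = 0 := by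
      have := congrArg Subtype.val hp
      rw [Fin.sum_univ_succ] at this
      simp only [e, Fin.cons_zero, Fin.cons_succ] at this
      rw [Subalgebra.coe_add, AddSubmonoidClass.coe_finsetSum, vero_smul] at this
      simpa [vero_smul, b'] using this
    have hn : ∀ n, homogeneousComponent (n + 1) (p 0) = 0 ∧
        ∀ j : Fin D, homogeneousComponent n (p j.succ) = 0 := by
      intro n
      apply graded_inj h₁ h₂ hc hz1 hz2 hbh hb n (homogeneousComponent_isHomogeneous _ _)
        (fun j => homogeneousComponent_isHomogeneous _ _)
      have := congrArg (homogeneousComponent ((n + 1) * (D + 1))) hp'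
      rw [map_add, map_sum, hc_psi (by omega) h₁ h₂, map_zero] at this
      rw [← this]
      congr 1
      refine Finset.sum_congr rfl fun j _ => ?_
      rw [hc_psi_mul (by omega) h₁ h₂ _ _ (i := 1) (by simpa using hbh j), if_pos (by omega)]
      simp
    have h0 : homogeneousComponent 0 (p 0) = 0 := by
      have := congrArg (homogeneousComponent (0 * (D + 1))) hp'
      rw [map_add, map_sum, hc_psi (by omega) h₁ h₂, map_zero, Finset.sum_eq_zero, add_zero] at this
      · rw [homogeneousComponent_zero, algHom_C, algebraMap_eq] at this
        rw [homogeneousComponent_zero, this]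
      · intro j _
        rw [hc_psi_mul (by omega) h₁ h₂ _ _ (i := 1) (by simpa using hbh j), if_neg (by omega)]
    intro i
    apply ext_hc
    intro n
    rw [map_zero]
    refine Fin.cases ?_ (fun j => ?_) i
    · rcases n with _ | n
      · exact h0
      · exact (hn n).1
    · exact (hn n).2 j
  have hsp : ⊤ ≤ Submodule.span (MvPolynomial (Fin 2) k) (Set.range e) := by
    have key : ∀ (m : ℕ) (w : MvPolynomial (Fin 2) k) (hw : w.IsHomogeneous (m * (D + 1))),
        (⟨w, Hf_le_veronese hw⟩ : veronese k (D + 1)) ∈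
          Submodule.span (MvPolynomial (Fin 2) k) (Set.range e) := by
      intro m w hw
      rw [Submodule.mem_span_range_iff_exists_fun]
      rcases m with _ | m
      · rw [zero_mul] at hw
        have hw' : w = C (coeff 0 w) := by
          rw [← homogeneousComponent_zero, hc_of_hom hw, if_pos rfl]
        refine ⟨Fin.cons (C (coeff 0 w)) 0, ?_⟩
        rw [Fin.sum_univ_succ]
        apply Subtype.ext
        simp only [e, Fin.cons_zero, Fin.cons_succ, Pi.zero_apply, zero_smul,
          Finset.sum_const_zero, add_zero]
        rw [vero_smul, algHom_C, algebraMap_eq]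
        simpa using hw'.symm
      · obtain ⟨q₀, q, hq⟩ := graded_span h₁ h₂ hc hz1 hz2 hb m w hw
        refine ⟨Fin.cons q₀.1 (fun j => (q j).1), ?_⟩
        rw [Fin.sum_univ_succ]
        apply Subtype.ext
        simp only [e, Fin.cons_zero, Fin.cons_succ]
        rw [Subalgebra.coe_add, AddSubmonoidClass.coe_finsetSum, vero_smul]
        simp only [vero_smul, b', OneMemClass.coe_one, mul_one]
        exact hq.symm
    rintro ⟨v, hv⟩ -
    have : (⟨v, hv⟩ : veronese k (D + 1)) = ∑ i ∈ Finset.range (v.totalDegree + 1),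
        (⟨homogeneousComponent i v, (adjoin_graded (fun f hf => hf) hv i).1⟩ :
          veronese k (D + 1)) := by
      apply Subtype.ext
      rw [AddSubmonoidClass.coe_finsetSum]
      exact (sum_hc_of_le v _ (Nat.lt_succ_self _)).symm
    rw [this]
    refine Submodule.sum_mem _ fun i _ => ?_
    by_cases h0 : homogeneousComponent i v = 0
    · convert Submodule.zero_mem _
      exact Subtype.ext h0
    · obtain ⟨m, hm⟩ := mem_veronese_iff.mp hv i h0
      exact key m _ (by rw [mul_comm, ← hm]; exact homogeneousComponent_isHomogeneous _ _)
  refine ⟨Module.Basis.mk hli hsp, fun i => ?_⟩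
  rw [Module.Basis.mk_apply]
  refine Fin.cases ?_ (fun j => ?_) i
  · simp only [e, Fin.cons_zero, degE, if_true, zero_mul]
    exact isHomogeneous_one _ _
  · simp only [e, Fin.cons_succ, degE, Fin.succ_ne_zero, if_false, one_mul]
    exact hbh j

end core2

set_option linter.style.haveILetI false
set_option linter.unusedVariables false
open MvPolynomial

section core3
variable {k : Type*} [Field k]

lemma mem_cone_iff {D : ℕ} {f₁ f₂ y : MvPolynomial (Fin 2) k} (h₁ : f₁.IsHomogeneous (D + 1))
    (h₂ : f₂.IsHomogeneous (D + 1)) (hc : IsRelPrime f₁ f₂) (hz1 : f₁ ≠ 0) (hz2 : f₂ ≠ 0)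
    (hy : y ∈ veronese k (D + 1)) (v : veronese k (D + 1)) :
    letI := veroAlg h₁ h₂
    (v : MvPolynomial (Fin 2) k) ∈ Algebra.adjoin k {f₁, f₂, y} ↔
      v ∈ powSpan (MvPolynomial (Fin 2) k) (D + 1) (⟨y, hy⟩ : veronese k (D + 1)) := by
  letI := veroAlg h₁ h₂
  obtain ⟨β, hβ⟩ := vero_basis h₁ h₂ hc hz1 hz2
  have hpsi : ∀ q : MvPolynomial (Fin 2) k, aeval ![f₁, f₂] q ∈ Algebra.adjoin k {f₁, f₂, y} := by
    intro q
    have : aeval ![f₁, f₂] q ∈ Algebra.adjoin k (Set.range ![f₁, f₂]) := by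
      rw [Algebra.adjoin_range_eq_range_aeval]; exact ⟨q, rfl⟩
    refine Algebra.adjoin_mono ?_ this
    rintro _ ⟨i, rfl⟩
    fin_cases i <;> simp
  constructor
  · intro h
    have : ∀ x ∈ Algebra.adjoin k {f₁, f₂, y}, ∃ hx : x ∈ veronese k (D + 1),
        (⟨x, hx⟩ : veronese k (D + 1)) ∈
          powSpan (MvPolynomial (Fin 2) k) (D + 1) (⟨y, hy⟩ : veronese k (D + 1)) := by
      have h1 := pow_mem_powSpan β ⟨y, hy⟩ 0
      rw [pow_zero] at h1
      intro x hx
      induction hx using Algebra.adjoin_induction with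
      | mem x hx =>
        rcases hx with rfl | rfl | rfl
        · refine ⟨Hf_le_veronese (m := 1) (by simpa using h₁), ?_⟩
          convert Submodule.smul_mem _ (X 0) h1
          rw [vero_smul]; simp
        · refine ⟨Hf_le_veronese (m := 1) (by simpa using h₂), ?_⟩
          convert Submodule.smul_mem _ (X 1) h1
          rw [vero_smul]; simp
        · refine ⟨hy, ?_⟩
          simpa using pow_mem_powSpan β ⟨x, hy⟩ 1
      | algebraMap r =>
        refine ⟨algebraMap_mem _ r, ?_⟩
        convert Submodule.smul_mem _ (C r) h1
        rw [vero_smul]; simp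
      | add x z _ _ hx hz =>
        obtain ⟨hx1, hx2⟩ := hx
        obtain ⟨hz1, hz2⟩ := hz
        have h := Submodule.add_mem _ hx2 hz2
        exact ⟨add_mem hx1 hz1, h⟩
      | mul x z _ _ hx hz =>
        obtain ⟨hx1, hx2⟩ := hx
        obtain ⟨hz1, hz2⟩ := hz
        have h := powSpan_mul_mem β hx2 hz2
        exact ⟨mul_mem hx1 hz1, h⟩
    exact (this _ h).2
  · intro h
    obtain ⟨p, rfl⟩ := mem_powSpan.mp h
    rw [AddSubmonoidClass.coe_finsetSum]
    refine sum_mem fun i _ => ?_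
    rw [vero_smul]
    exact mul_mem (hpsi _) (pow_mem (Algebra.subset_adjoin (by simp)) _)

/-- conductor-type data gives a nonzero `r` -/
lemma exists_r {D : ℕ} {f₁ f₂ y a : MvPolynomial (Fin 2) k} (h₁ : f₁.IsHomogeneous (D + 1))
    (h₂ : f₂.IsHomogeneous (D + 1)) (hc : IsRelPrime f₁ f₂) (hz1 : f₁ ≠ 0) (hz2 : f₂ ≠ 0)
    (hy : y ∈ veronese k (D + 1)) (ha0 : a ≠ 0) (haA : a ∈ Algebra.adjoin k {f₁, f₂, y})
    (ha : ∀ v : MvPolynomial (Fin 2) k, v.IsHomogeneous (D + 1) →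
      a * v ∈ Algebra.adjoin k {f₁, f₂, y}) :
    letI := veroAlg h₁ h₂
    ∃ r : MvPolynomial (Fin 2) k, r ≠ 0 ∧ ∀ v : veronese k (D + 1), r • v ∈
      powSpan (MvPolynomial (Fin 2) k) (D + 1) (⟨y, hy⟩ : veronese k (D + 1)) := by
  letI := veroAlg h₁ h₂
  obtain ⟨β, hβ⟩ := vero_basis h₁ h₂ hc hz1 hz2
  have haV : a ∈ veronese k (D + 1) := by
    have : Algebra.adjoin k {f₁, f₂, y} ≤ veronese k (D + 1) := by
      refine Algebra.adjoin_le ?_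
      rintro x (rfl | rfl | rfl)
      · exact Hf_le_veronese (m := 1) (by simpa using h₁)
      · exact Hf_le_veronese (m := 1) (by simpa using h₂)
      · exact hy
    exact this haA
  let a' : veronese k (D + 1) := ⟨a, haV⟩
  have hav : ∀ v : veronese k (D + 1), a' * v ∈
      powSpan (MvPolynomial (Fin 2) k) (D + 1) (⟨y, hy⟩ : veronese k (D + 1)) := by
    intro v
    rw [← β.sum_repr v, Finset.mul_sum]
    refine Submodule.sum_mem _ fun i _ => ?_
    rw [mul_smul_comm]
    refine Submodule.smul_mem _ _ ?_
    rw [← mem_cone_iff h₁ h₂ hc hz1 hz2 hy]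
    have hi := hβ i
    change a * (β i : MvPolynomial (Fin 2) k) ∈ _
    rw [degE] at hi
    split_ifs at hi
    · rw [zero_mul] at hi
      have hw' : (β i : MvPolynomial (Fin 2) k) = C (coeff 0 (β i : MvPolynomial (Fin 2) k)) := by
        rw [← homogeneousComponent_zero, hc_of_hom hi, if_pos rfl]
      rw [hw']
      exact mul_mem haA (Subalgebra.algebraMap_mem _ _)
    · rw [one_mul] at hi
      exact ha _ hi
  have : Module.Finite (MvPolynomial (Fin 2) k) (veronese k (D + 1)) := Module.Finite.of_basis β
  have hInt : IsAlgebraic (MvPolynomial (Fin 2) k) a' :=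
    (Algebra.IsIntegral.isIntegral (R := MvPolynomial (Fin 2) k) a').isAlgebraic
  obtain ⟨r, hr, v, hv⟩ := hInt.exists_nonzero_dvd
    (mem_nonZeroDivisors_of_ne_zero (fun h => ha0 (congrArg Subtype.val h)))
  refine ⟨r, hr, fun w => ?_⟩
  rw [Algebra.smul_def, hv, mul_assoc]
  exact hav _

lemma vero_hc_mem {d : ℕ} (v : veronese k d) (n : ℕ) :
    homogeneousComponent n (v : MvPolynomial (Fin 2) k) ∈ veronese k d :=
  (adjoin_graded (fun f hf => hf) v.2 n).1

/-- graded pieces of the power expansion -/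
lemma hc_pow_sum {D : ℕ} {f₁ f₂ y : MvPolynomial (Fin 2) k} (h₁ : f₁.IsHomogeneous (D + 1))
    (h₂ : f₂.IsHomogeneous (D + 1)) (hyh : y.IsHomogeneous (D + 1))
    (hy : y ∈ veronese k (D + 1)) (p : Fin (D + 1) → MvPolynomial (Fin 2) k) (m : ℕ) :
    letI := veroAlg h₁ h₂
    homogeneousComponent (m * (D + 1)) ((∑ i, p i • (⟨y, hy⟩ : veronese k (D + 1)) ^ (i : ℕ) :
      veronese k (D + 1)) : MvPolynomial (Fin 2) k) =
      ((∑ i : Fin (D + 1), (if (i : ℕ) ≤ m then homogeneousComponent (m - i) (p i) else 0) •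
        (⟨y, hy⟩ : veronese k (D + 1)) ^ (i : ℕ) : veronese k (D + 1)) :
          MvPolynomial (Fin 2) k) := by
  letI := veroAlg h₁ h₂
  rw [AddSubmonoidClass.coe_finsetSum, AddSubmonoidClass.coe_finsetSum, map_sum]
  refine Finset.sum_congr rfl fun i _ => ?_
  rw [vero_smul, vero_smul]
  have hyi : (((⟨y, hy⟩ : veronese k (D + 1)) ^ (i : ℕ) : veronese k (D + 1)) :
      MvPolynomial (Fin 2) k).IsHomogeneous (i * (D + 1)) := by
    have := hyh.pow i
    rw [mul_comm]; exact this
  rw [hc_psi_mul (by omega) h₁ h₂ _ _ hyi]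
  split_ifs <;> simp

lemma tau_hc {D : ℕ} {f₁ f₂ y : MvPolynomial (Fin 2) k} (h₁ : f₁.IsHomogeneous (D + 1))
    (h₂ : f₂.IsHomogeneous (D + 1)) (hyh : y.IsHomogeneous (D + 1))
    (hy : y ∈ veronese k (D + 1)) {r : MvPolynomial (Fin 2) k} (hr : r ≠ 0) :
    letI := veroAlg h₁ h₂
    ∀ (τ : veronese k (D + 1) →ₗ[MvPolynomial (Fin 2) k] MvPolynomial (Fin 2) k)
    (hτ : ∀ p : Fin (D + 1) → MvPolynomial (Fin 2) k,
      τ (∑ i, p i • (⟨y, hy⟩ : veronese k (D + 1)) ^ (i : ℕ)) = r * p (Fin.last D))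
    (u w : veronese k (D + 1)) (hu : u ∈ powSpan (MvPolynomial (Fin 2) k) (D + 1)
      (⟨y, hy⟩ : veronese k (D + 1))) (m : ℕ) (s : MvPolynomial (Fin 2) k) (hs : τ u = r * s)
    (hw : (w : MvPolynomial (Fin 2) k) = homogeneousComponent (m * (D + 1)) u),
    τ w = r * if D ≤ m then homogeneousComponent (m - D) s else 0 := by
  letI := veroAlg h₁ h₂
  intro τ hτ u w hu m s hs hw
  obtain ⟨p, rfl⟩ := mem_powSpan.mp hu
  rw [hτ] at hs
  have hs' := mul_left_cancel₀ hr hs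
  have : w = _ := Subtype.ext (hw.trans (hc_pow_sum h₁ h₂ hyh hy p m))
  rw [this, hτ, hs']
  rfl

end core3

set_option linter.style.haveILetI false
set_option linter.unusedVariables false
open MvPolynomial

section core4
variable {k : Type*} [Field k]

/-- homogeneous components of elements `v` with `vV ⊆ A` have the same property -/
lemma cond_hc {g : Fin 3 → MvPolynomial (Fin 2) k} {d : ℕ} (hd : 1 ≤ d)
    (hg : ∀ i, (g i).IsHomogeneous d)
    {v : MvPolynomial (Fin 2) k}
    (h : ∀ w ∈ veronese k d, v * w ∈ coneRing g) (n : ℕ) :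
    ∀ w ∈ veronese k d, homogeneousComponent n v * w ∈ coneRing g := by
  intro w hw
  rw [← sum_hc_of_le w _ (Nat.lt_succ_self _), Finset.mul_sum]
  refine sum_mem fun i _ => ?_
  rw [mul_comm, ← hc_mul_left (homogeneousComponent_isHomogeneous i w)]
  apply cone_hc hg
  rw [mul_comm]
  exact h _ (adjoin_graded (fun f hf => hf) hw i).1

lemma sum_aux1 (D n : ℕ) (h : D ≤ n) :
    (∑ i : Fin (D + 1), (n - (i : ℕ) + 1)) + D.choose 2 = n * (D + 1) + 1 := by
  rw [← Finset.sum_range (fun i => n - i + 1)]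
  induction D with
  | zero => simp
  | succ D ih =>
    rw [Finset.sum_range_succ, Nat.choose_succ_succ' D 1, Nat.choose_one_right]
    have := ih (by omega)
    rw [show 1 + 1 = 2 from rfl, show n * (D + 1 + 1) = n * (D + 1) + n by ring]
    omega

lemma core_i {D : ℕ} {g : Fin 3 → MvPolynomial (Fin 2) k} {f₁ f₂ y a : MvPolynomial (Fin 2) k}
    (h₁ : f₁.IsHomogeneous (D + 1))
    (h₂ : f₂.IsHomogeneous (D + 1)) (hc : IsRelPrime f₁ f₂) (hz1 : f₁ ≠ 0) (hz2 : f₂ ≠ 0)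
    (hyh : y.IsHomogeneous (D + 1)) (hA : coneRing g = Algebra.adjoin k {f₁, f₂, y})
    (ha0 : a ≠ 0) (haA : a ∈ coneRing g)
    (ha : ∀ v : MvPolynomial (Fin 2) k, v.IsHomogeneous (D + 1) → a * v ∈ coneRing g)
    (n : ℕ) (hn : D ≤ n) :
    Module.finrank k (coneN g (D + 1) n) + D.choose 2 = n * (D + 1) + 1 := by
  letI := veroAlg h₁ h₂
  obtain ⟨β, hβ⟩ := vero_basis h₁ h₂ hc hz1 hz2
  have hy : y ∈ veronese k (D + 1) := Hf_le_veronese (m := 1) (by simpa using hyh)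
  rw [hA] at haA ha
  obtain ⟨r, hr, hrV⟩ := exists_r h₁ h₂ hc hz1 hz2 hy ha0 haA ha
  have hli := pow_linIndep β ⟨y, hy⟩ hr hrV
  let T : ((i : Fin (D + 1)) → Hf k (n - i)) →ₗ[k] MvPolynomial (Fin 2) k :=
    ∑ i : Fin (D + 1), (LinearMap.mulRight k (y ^ (i : ℕ))) ∘ₗ
      (aeval ![f₁, f₂] : MvPolynomial (Fin 2) k →ₐ[k] MvPolynomial (Fin 2) k).toLinearMap ∘ₗ
        (Hf k (n - i)).subtype ∘ₗ LinearMap.proj i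
  have hT : ∀ p, T p = ((∑ i, (p i).1 • (⟨y, hy⟩ : veronese k (D + 1)) ^ (i : ℕ) :
      veronese k (D + 1)) : MvPolynomial (Fin 2) k) := by
    intro p
    rw [AddSubmonoidClass.coe_finsetSum]
    simp only [T, LinearMap.sum_apply]
    refine Finset.sum_congr rfl fun i _ => ?_
    rw [vero_smul]
    rfl
  have hinj : Function.Injective T := by
    rw [← LinearMap.ker_eq_bot, LinearMap.ker_eq_bot']
    intro p hp
    rw [hT] at hp
    have := Fintype.linearIndependent_iff.mp hli (fun i => (p i).1) (Subtype.ext hp)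
    ext i : 1
    exact Subtype.ext (this i)
  have hrange : LinearMap.range T = coneN g (D + 1) n := by
    apply le_antisymm
    · rintro _ ⟨p, rfl⟩
      refine ⟨?_, ?_⟩
      · rw [hT]
        change _ ∈ coneRing g
        rw [hA, mem_cone_iff h₁ h₂ hc hz1 hz2 hy]
        exact mem_powSpan.mpr ⟨_, rfl⟩
      · simp only [T, LinearMap.sum_apply]
        refine sum_mem fun i _ => ?_
        have h := (hyh.pow i)
        refine Hf_mul (psi_hom h₁ h₂ (p i).2) h ?_
        have : (i : ℕ) ≤ n := by omega
        rw [mul_comm (D + 1), ← add_mul, Nat.sub_add_cancel this]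
    · rintro v ⟨hv, hvh⟩
      change v ∈ coneRing g at hv
      have hvV : v ∈ veronese k (D + 1) := Hf_le_veronese hvh
      rw [hA] at hv
      obtain ⟨p, hp⟩ := mem_powSpan.mp ((mem_cone_iff h₁ h₂ hc hz1 hz2 hy ⟨v, hvV⟩).mp hv)
      refine ⟨fun i => ⟨homogeneousComponent (n - i) (p i),
        homogeneousComponent_isHomogeneous _ _⟩, ?_⟩
      rw [hT]
      have h := hc_pow_sum h₁ h₂ hyh hy p n
      rw [← hp] at h
      change homogeneousComponent (n * (D + 1)) v = _ at h
      rw [hc_of_hom hvh, if_pos rfl] at h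
      rw [h]
      congr 1
      refine Finset.sum_congr rfl fun i _ => ?_
      rw [if_pos (by omega)]
  rw [← hrange, LinearMap.finrank_range_of_inj hinj, Module.finrank_pi_fintype]
  simp only [finrank_Hf]
  exact sum_aux1 D n hn

lemma core_ii {D : ℕ} {g : Fin 3 → MvPolynomial (Fin 2) k} {f₁ f₂ y a : MvPolynomial (Fin 2) k}
    (hD : 1 ≤ D) (hg : ∀ i, (g i).IsHomogeneous (D + 1))
    (h₁ : f₁.IsHomogeneous (D + 1))
    (h₂ : f₂.IsHomogeneous (D + 1)) (hc : IsRelPrime f₁ f₂) (hz1 : f₁ ≠ 0) (hz2 : f₂ ≠ 0)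
    (hyh : y.IsHomogeneous (D + 1)) (hA : coneRing g = Algebra.adjoin k {f₁, f₂, y})
    (ha0 : a ≠ 0) (haA : a ∈ coneRing g)
    (ha : ∀ v : MvPolynomial (Fin 2) k, v.IsHomogeneous (D + 1) → a * v ∈ coneRing g) :
    D ≤ Module.finrank k (condN g (D + 1) (D - 1)) := by
  letI := veroAlg h₁ h₂
  obtain ⟨β, hβ⟩ := vero_basis h₁ h₂ hc hz1 hz2
  have hy : y ∈ veronese k (D + 1) := Hf_le_veronese (m := 1) (by simpa using hyh)
  rw [hA] at haA ha
  obtain ⟨r, hr, hrV⟩ := exists_r h₁ h₂ hc hz1 hz2 hy ha0 haA ha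
  obtain ⟨τ, hτ⟩ := exists_tau β ⟨y, hy⟩ hr hrV
  choose u hu hud using fun j : Fin D => tau_dual β hr hrV hτ (β.coord j.succ)
  have hmem : ∀ j, homogeneousComponent ((D - 1) * (D + 1)) (u j : MvPolynomial (Fin 2) k) ∈
      condN g (D + 1) (D - 1) := by
    intro j
    refine ⟨homogeneousComponent_isHomogeneous _ _, cond_hc (by omega) hg ?_ _⟩
    intro w hw
    have h0 := hu j ⟨w, hw⟩
    rw [← mem_cone_iff h₁ h₂ hc hz1 hz2 hy] at h0
    rw [hA]
    exact h0
  let u' : Fin D → veronese k (D + 1) := fun j => ⟨_, vero_hc_mem (u j) ((D - 1) * (D + 1))⟩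
  have hud' : ∀ i j : Fin D, τ (u' j * β i.succ) = r * if i = j then 1 else 0 := by
    intro i j
    have := tau_hc h₁ h₂ hyh hy hr τ hτ (u j * β i.succ) (u' j * β i.succ) (hu j _) D _ (hud j _) ?_
    · rw [this, if_pos le_rfl, Nat.sub_self, Module.Basis.coord_apply, Module.Basis.repr_self,
        Finsupp.single_apply]
      simp only [Fin.succ_inj]
      split_ifs
      · rw [hc_of_hom (isHomogeneous_one _ _), if_pos rfl]
      · simp
    · have hb := hβ i.succ
      simp only [degE, Fin.succ_ne_zero, if_false] at hb
      change homogeneousComponent ((D - 1) * (D + 1)) (u j : MvPolynomial (Fin 2) k) *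
        (β i.succ : MvPolynomial (Fin 2) k) = homogeneousComponent (D * (D + 1))
          ((u j : MvPolynomial (Fin 2) k) * (β i.succ : MvPolynomial (Fin 2) k))
      rw [mul_comm, ← hc_mul_left hb, ← add_mul, mul_comm (u j : MvPolynomial (Fin 2) k)]
      congr 2
      congr 1
      omega
  let U : Fin D → condN g (D + 1) (D - 1) := fun j => ⟨_, hmem j⟩
  have hli : LinearIndependent k U := by
    rw [Fintype.linearIndependent_iff]
    intro c hcc i
    have h0 : ∑ j, (C (c j) : MvPolynomial (Fin 2) k) • u' j = 0 := by
      have := congrArg Subtype.val hcc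
      apply Subtype.ext
      rw [AddSubmonoidClass.coe_finsetSum] at this ⊢
      rw [← ZeroMemClass.coe_zero (condN g (D + 1) (D - 1))] at *
      refine Eq.trans ?_ this
      refine Finset.sum_congr rfl fun j _ => ?_
      rw [vero_C_smul]
      rfl
    have h1 := congrArg (fun z => τ (z * β i.succ)) h0
    simp only [Finset.sum_mul, smul_mul_assoc, map_sum, map_smul, hud', zero_mul, map_zero,
      smul_eq_mul] at h1
    simpa [hr] using h1
  simpa using hli.fintype_card_le_finrank

lemma core_iii {D : ℕ} {g : Fin 3 → MvPolynomial (Fin 2) k} {f₁ f₂ y a : MvPolynomial (Fin 2) k}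
    (hD : 1 ≤ D)
    (h₁ : f₁.IsHomogeneous (D + 1))
    (h₂ : f₂.IsHomogeneous (D + 1)) (hc : IsRelPrime f₁ f₂) (hz1 : f₁ ≠ 0) (hz2 : f₂ ≠ 0)
    (hyh : y.IsHomogeneous (D + 1)) (hA : coneRing g = Algebra.adjoin k {f₁, f₂, y})
    (ha0 : a ≠ 0) (haA : a ∈ coneRing g)
    (ha : ∀ v : MvPolynomial (Fin 2) k, v.IsHomogeneous (D + 1) → a * v ∈ coneRing g)
    (n : ℕ) (hn : D ≤ n) :
    Module.finrank k (condN g (D + 1) n) + D * (D - 1) ≤ n * (D + 1) + 1 := by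
  letI := veroAlg h₁ h₂
  obtain ⟨β, hβ⟩ := vero_basis h₁ h₂ hc hz1 hz2
  have hy : y ∈ veronese k (D + 1) := Hf_le_veronese (m := 1) (by simpa using hyh)
  rw [hA] at haA ha
  obtain ⟨r, hr, hrV⟩ := exists_r h₁ h₂ hc hz1 hz2 hy ha0 haA ha
  obtain ⟨τ, hτ⟩ := exists_tau β ⟨y, hy⟩ hr hrV
  let τ' : veronese k (D + 1) →ₗ[k] MvPolynomial (Fin 2) k :=
    { toFun := τ
      map_add' := map_add τ
      map_smul' := by
        intro c v
        rw [← vero_C_smul h₁ h₂, map_smul, smul_eq_mul, smul_eq_C_mul]; rfl }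
  let J : condN g (D + 1) n →ₗ[k] veronese k (D + 1) :=
    { toFun := fun v => ⟨v.1, Hf_le_veronese v.2.1⟩
      map_add' := fun _ _ => rfl
      map_smul' := fun _ _ => rfl }
  let Φ : condN g (D + 1) n →ₗ[k]
      ((i : Fin (D + 1)) → (Hf k (n + degE i - D)).map (LinearMap.mulLeft k r)) :=
    LinearMap.pi fun i => LinearMap.codRestrict _
      (τ' ∘ₗ LinearMap.mulRight k (β i) ∘ₗ J) (by
        intro v
        have hmem : J v * β i ∈ powSpan (MvPolynomial (Fin 2) k) (D + 1)
            (⟨y, hy⟩ : veronese k (D + 1)) := by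
          rw [← mem_cone_iff h₁ h₂ hc hz1 hz2 hy, ← hA]
          exact v.2.2 _ (β i).2
        obtain ⟨s, hs⟩ := tau_mem hτ hmem
        have := tau_hc h₁ h₂ hyh hy hr τ hτ _ (J v * β i) hmem (n + degE i) s hs (by
          have : ((J v * β i : veronese k (D + 1)) : MvPolynomial (Fin 2) k).IsHomogeneous
              ((n + degE i) * (D + 1)) := Hf_mul v.2.1 (hβ i) (by ring)
          rw [hc_of_hom this, if_pos rfl])
        rw [if_pos (by omega)] at this
        exact ⟨_, homogeneousComponent_isHomogeneous _ _, this.symm⟩)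
  have hinj : Function.Injective Φ := by
    rw [← LinearMap.ker_eq_bot, LinearMap.ker_eq_bot']
    intro v hv
    have h0 : ∀ i, τ (J v * β i) = 0 := fun i => congrArg Subtype.val (congrFun hv i)
    have h1 : ∀ w, τ (J v * w) = 0 := by
      intro w
      rw [← β.sum_repr w, Finset.mul_sum, map_sum]
      refine Finset.sum_eq_zero fun i _ => ?_
      rw [mul_smul_comm, map_smul, h0, smul_zero]
    have := tau_nondeg β hr hrV hτ (fun j _ => h1 _)
    have hJ : ((J v : veronese k (D + 1)) : MvPolynomial (Fin 2) k) = 0 := by rw [this]; rfl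
    exact Subtype.ext hJ
  have h := LinearMap.finrank_le_finrank_of_injective hinj
  rw [Module.finrank_pi_fintype] at h
  have h2 : ∑ i : Fin (D + 1), Module.finrank k
      ((Hf k (n + degE i - D)).map (LinearMap.mulLeft k r)) ≤
      ∑ i : Fin (D + 1), (n + degE i - D + 1) := by
    refine Finset.sum_le_sum fun i _ => ?_
    refine (Submodule.finrank_map_le _ _).trans ?_
    rw [finrank_Hf]
  have h3 : ∑ i : Fin (D + 1), (n + degE i - D + 1) = (n - D + 1) + D * (n + 1 - D + 1) := by
    rw [Fin.sum_univ_succ]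
    simp [degE, Fin.succ_ne_zero]
  obtain ⟨m, rfl⟩ := Nat.exists_eq_add_of_le hn
  obtain ⟨E, rfl⟩ := Nat.exists_eq_add_of_le hD
  have e1 : 1 + E + m - (1 + E) = m := by omega
  have e2 : 1 + E + m + 1 - (1 + E) = m + 1 := by omega
  have e3 : 1 + E - 1 = E := by omega
  rw [e1, e2] at h3
  rw [e3]
  nlinarith

end core4

set_option linter.style.haveILetI false
set_option linter.unusedVariables false
open MvPolynomial

section choice
variable {k : Type*} [Field k]

lemma form_not_unit {D : ℕ} {f : MvPolynomial (Fin 2) k} (h : f.IsHomogeneous (D + 1)) :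
    ¬ IsUnit f := by
  intro hu
  have hz1 : f ≠ 0 := hu.ne_zero
  obtain ⟨c, hc, e⟩ := MvPolynomial.isUnit_iff_eq_C_of_isReduced.mp hu
  have := h.totalDegree hz1
  rw [e, totalDegree_C] at this
  omega

lemma prime_not_dvd_both {p : MvPolynomial (Fin 2) k} (hp : Prime p) (h0 : p ∣ X 0)
    (h1 : p ∣ X 1) : False := by
  have : Associated p (X 0) := hp.irreducible.associated_of_dvd
    (X_prime (R := k) (i := (0 : Fin 2))).irreducible h0
  exact X_not_dvd_X (k := k) (this.symm.dvd.trans h1)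

lemma Mxy_not_le_prime {p : MvPolynomial (Fin 2) k} (hp : Prime p) (N : ℕ) :
    ¬ Mxy k ^ N ≤ Ideal.span {p} := by
  intro h
  have : ∀ i : Fin 2, (X i : MvPolynomial (Fin 2) k) ∈ Mxy k := by
    intro i
    refine Ideal.subset_span ?_
    fin_cases i <;> simp
  have h2 : ∀ i : Fin 2, p ∣ X i := fun i =>
    hp.dvd_of_dvd_pow (Ideal.mem_span_singleton.mp (h (Ideal.pow_mem_pow (this i) N)))
  exact prime_not_dvd_both hp (h2 0) (h2 1)

lemma fin3_univ : ∀ i j l : Fin 3, i ≠ j → i ≠ l → j ≠ l →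
    (Finset.univ : Finset (Fin 3)) = {i, j, l} := by decide

lemma fin3_third : ∀ i l : Fin 3, ∃ j, i ≠ j ∧ j ≠ l := by decide

lemma choice [Infinite k] {D : ℕ} {g : Fin 3 → MvPolynomial (Fin 2) k}
    (hg : ∀ i, (g i).IsHomogeneous (D + 1)) {N : ℕ}
    (hN : Mxy k ^ N ≤ Ideal.span (Set.range g)) :
    ∃ f₁ f₂ y : MvPolynomial (Fin 2) k, f₁.IsHomogeneous (D + 1) ∧ f₂.IsHomogeneous (D + 1) ∧
      y.IsHomogeneous (D + 1) ∧ IsRelPrime f₁ f₂ ∧ f₁ ≠ 0 ∧ f₂ ≠ 0 ∧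
      coneRing g = Algebra.adjoin k {f₁, f₂, y} := by
  classical
  obtain ⟨i, hi⟩ : ∃ i, g i ≠ 0 := by
    by_contra! h
    have : Ideal.span (Set.range g) = ⊥ := by
      rw [Ideal.span_eq_bot]; rintro _ ⟨i, rfl⟩; exact h i
    rw [this] at hN
    exact Mxy_not_le_prime (X_prime (R := k) (i := (0 : Fin 2))) N (hN.trans bot_le)
  let lc : (Fin 3 → k) →ₗ[k] MvPolynomial (Fin 2) k := Fintype.linearCombination k g
  have hlc : ∀ α, lc α = ∑ j, α j • g j := fun α => Fintype.linearCombination_apply k g α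
  let S := (UniqueFactorizationMonoid.factors (g i)).toFinset
  let W : S → Submodule k (Fin 3 → k) := fun p =>
    ((Ideal.span {p.1}).restrictScalars k).comap lc
  have hSp : ∀ p : S, Prime p.1 := fun p =>
    UniqueFactorizationMonoid.prime_of_factor _ (Multiset.mem_toFinset.mp p.2)
  have hW : ∀ p, W p ≠ ⊤ := by
    intro p hp
    apply Mxy_not_le_prime (hSp p) N
    refine hN.trans ?_
    rw [Ideal.span_le]
    rintro _ ⟨j, rfl⟩
    have : (Pi.single j 1 : Fin 3 → k) ∈ W p := by rw [hp]; trivial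
    have h2 : lc (Pi.single j 1) ∈ Ideal.span {p.1} := this
    rw [hlc] at h2
    simpa [Pi.single_apply] using h2
  obtain ⟨α, hα⟩ : ∃ α, ∀ p, α ∉ W p := by
    by_contra! h
    obtain ⟨p, hp⟩ := Subspace.exists_eq_top_of_iUnion_eq_univ (p := W) (by
      ext α
      simpa using h α)
    exact hW p hp
  let f₂ := lc α
  have hf₂ : f₂.IsHomogeneous (D + 1) := by
    change lc α ∈ Hf k (D + 1)
    rw [hlc]
    exact sum_mem fun j _ => Submodule.smul_mem _ _ (hg j)
  have hno : ∀ z, Irreducible z → z ∣ g i → ¬ z ∣ f₂ := by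
    intro z hz h1 h2
    obtain ⟨q, hq, hzq⟩ := UniqueFactorizationMonoid.exists_mem_factors_of_dvd hi hz h1
    refine hα ⟨q, Multiset.mem_toFinset.mpr hq⟩ ?_
    exact Ideal.mem_span_singleton.mpr (hzq.symm.dvd.trans h2)
  have hrp : IsRelPrime (g i) f₂ :=
    WfDvdMonoid.isRelPrime_of_no_irreducible_factors (fun h => hi h.1) hno
  have hf0 : f₂ ≠ 0 := by
    intro h0
    obtain ⟨z, hz, hzd⟩ := WfDvdMonoid.exists_irreducible_factor (form_not_unit (hg i)) hi
    exact hno z hz hzd (h0 ▸ dvd_zero z)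
  have hmem : ∀ j, g j ∈ coneRing g := fun j => Algebra.subset_adjoin ⟨j, rfl⟩
  have hf₂A : f₂ ∈ coneRing g := by
    change lc α ∈ _
    rw [hlc]
    exact sum_mem fun j _ => Subalgebra.smul_mem _ (hmem j) _
  have key : ∀ j l : Fin 3, i ≠ j → i ≠ l → j ≠ l → α l ≠ 0 →
      coneRing g = Algebra.adjoin k {g i, f₂, g j} := by
    intro j l hij hil hjl hl
    have huniv : (Finset.univ : Finset (Fin 3)) = {i, j, l} := by
      convert fin3_univ i j l hij hil hjl
    apply le_antisymm
    · have hi' : g i ∈ Algebra.adjoin k {g i, f₂, g j} := Algebra.subset_adjoin (by simp)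
      have hj' : g j ∈ Algebra.adjoin k {g i, f₂, g j} := Algebra.subset_adjoin (by simp)
      have hf' : f₂ ∈ Algebra.adjoin k {g i, f₂, g j} := Algebra.subset_adjoin (by simp)
      have hl' : g l ∈ Algebra.adjoin k {g i, f₂, g j} := by
        have e : g l = (α l)⁻¹ • (f₂ - α i • g i - α j • g j) := by
          have : f₂ = α i • g i + α j • g j + α l • g l := by
            change lc α = _
            rw [hlc, huniv, Finset.sum_insert (by simp [hij, hil]),
              Finset.sum_insert (by simp [hjl]), Finset.sum_singleton, add_assoc]
          rw [this, eq_inv_smul_iff₀ hl]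
          ring
        rw [e]
        exact Subalgebra.smul_mem _ (sub_mem (sub_mem hf' (Subalgebra.smul_mem _ hi' _))
          (Subalgebra.smul_mem _ hj' _)) _
      refine Algebra.adjoin_le ?_
      rintro _ ⟨m, rfl⟩
      have : m ∈ ({i, j, l} : Finset (Fin 3)) := huniv ▸ Finset.mem_univ m
      simp only [Finset.mem_insert, Finset.mem_singleton] at this
      rcases this with rfl | rfl | rfl <;> assumption
    · refine Algebra.adjoin_le ?_
      rintro x (rfl | rfl | rfl)
      · exact hmem _
      · exact hf₂A
      · exact hmem _
  obtain ⟨l, hil, hl⟩ : ∃ l, i ≠ l ∧ α l ≠ 0 := by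
    by_contra! h
    have : f₂ = α i • g i := by
      change lc α = _
      rw [hlc, Finset.sum_eq_single i]
      · intro j _ hj; rw [h j hj.symm, zero_smul]
      · simp
    have hdvd : g i ∣ f₂ := by rw [this, smul_eq_C_mul]; exact dvd_mul_left _ _
    exact form_not_unit (hg i) (hrp dvd_rfl hdvd)
  obtain ⟨j, hij, hjl⟩ : ∃ j, i ≠ j ∧ j ≠ l := fin3_third i l
  exact ⟨g i, f₂, g j, hg i, hf₂, hg j, hrp, hi, hf0, key j l hij hil hjl hl⟩

/-- The three dimension estimates over an infinite field. -/
lemma dims_infinite [Infinite k] {D : ℕ} (hD : 1 ≤ D) {g : Fin 3 → MvPolynomial (Fin 2) k}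
    (hg : ∀ i, (g i).IsHomogeneous (D + 1)) {N : ℕ}
    (hN : Mxy k ^ N ≤ Ideal.span (Set.range g)) {a : MvPolynomial (Fin 2) k}
    (ha0 : a ≠ 0) (haA : a ∈ coneRing g)
    (ha : ∀ v : MvPolynomial (Fin 2) k, v.IsHomogeneous (D + 1) → a * v ∈ coneRing g) :
    (∀ n, D ≤ n → Module.finrank k (coneN g (D + 1) n) + D.choose 2 = n * (D + 1) + 1) ∧
    D ≤ Module.finrank k (condN g (D + 1) (D - 1)) ∧
    (∀ n, D ≤ n → Module.finrank k (condN g (D + 1) n) + D * (D - 1) ≤ n * (D + 1) + 1) := by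
  obtain ⟨f₁, f₂, y, h₁, h₂, hy, hc, hz1, hz2, hA⟩ := choice hg hN
  exact ⟨core_i h₁ h₂ hc hz1 hz2 hy hA ha0 haA ha, core_ii hD hg h₁ h₂ hc hz1 hz2 hy hA ha0 haA ha,
    core_iii hD h₁ h₂ hc hz1 hz2 hy hA ha0 haA ha⟩

end choice

set_option linter.style.haveILetI false
set_option linter.unusedVariables false
open MvPolynomial

section basechange
universe uK
variable {k : Type*} [Field k] {K : Type uK} [Field K] [Algebra k K]

/-- coefficientwise application of a functional -/
noncomputable def Eco (ε : K →ₗ[k] k) (p : MvPolynomial (Fin 2) K) : MvPolynomial (Fin 2) k :=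
  ∑ m ∈ p.support, monomial m (ε (coeff m p))

lemma coeff_Eco (ε : K →ₗ[k] k) (p : MvPolynomial (Fin 2) K) (m : Fin 2 →₀ ℕ) :
    coeff m (Eco ε p) = ε (coeff m p) := by
  classical
  rw [Eco, coeff_sum]
  simp only [coeff_monomial]
  rw [Finset.sum_ite_eq']
  split_ifs with h
  · rfl
  · rw [notMem_support_iff.mp h, map_zero]

lemma Eco_add (ε : K →ₗ[k] k) (p q : MvPolynomial (Fin 2) K) :
    Eco ε (p + q) = Eco ε p + Eco ε q := by
  ext m; simp [coeff_Eco]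

lemma Eco_zero (ε : K →ₗ[k] k) : Eco ε (0 : MvPolynomial (Fin 2) K) = 0 := by
  ext m; simp [coeff_Eco]

lemma Eco_sum {ι : Type*} (s : Finset ι) (f : ι → MvPolynomial (Fin 2) K) (ε : K →ₗ[k] k) :
    Eco ε (∑ i ∈ s, f i) = ∑ i ∈ s, Eco ε (f i) := by
  ext m; simp [coeff_Eco, coeff_sum]

lemma Eco_smul (ε : K →ₗ[k] k) (c : K) (p : MvPolynomial (Fin 2) K) :
    Eco ε (c • p) = Eco (ε ∘ₗ LinearMap.mulLeft k c) p := by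
  ext m; simp [coeff_Eco]

lemma Eco_mul_map (ε : K →ₗ[k] k) (p : MvPolynomial (Fin 2) K) (w : MvPolynomial (Fin 2) k) :
    Eco ε (p * map (algebraMap k K) w) = Eco ε p * w := by
  classical
  ext m
  rw [coeff_Eco, coeff_mul, coeff_mul, map_sum]
  refine Finset.sum_congr rfl fun x _ => ?_
  rw [coeff_Eco, coeff_map, mul_comm, ← Algebra.smul_def, map_smul, smul_eq_mul, mul_comm]

lemma Eco_map (ε : K →ₗ[k] k) (w : MvPolynomial (Fin 2) k) :
    Eco ε (map (algebraMap k K) w) = ε 1 • w := by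
  have := Eco_mul_map ε 1 w
  rw [one_mul] at this
  rw [this, smul_eq_C_mul]
  congr 1
  classical
  ext m
  rw [coeff_Eco, coeff_one, coeff_C]
  split_ifs <;> simp

lemma Eco_hom (ε : K →ₗ[k] k) {p : MvPolynomial (Fin 2) K} {n : ℕ} (h : p.IsHomogeneous n) :
    (Eco ε p).IsHomogeneous n := by
  intro m hm
  apply h
  intro h0
  rw [coeff_Eco, h0, map_zero] at hm
  exact hm rfl

lemma hc_Eco (ε : K →ₗ[k] k) (p : MvPolynomial (Fin 2) K) (n : ℕ) :
    homogeneousComponent n (Eco ε p) = Eco ε (homogeneousComponent n p) := by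
  ext m
  rw [coeff_Eco, coeff_homogeneousComponent, coeff_homogeneousComponent, coeff_Eco]
  split_ifs <;> simp

lemma Eco_veronese (ε : K →ₗ[k] k) {p : MvPolynomial (Fin 2) K} {d : ℕ} (h : p ∈ veronese K d) :
    Eco ε p ∈ veronese k d := by
  rw [mem_veronese_iff] at h ⊢
  intro n hn
  apply h
  intro h0
  rw [hc_Eco, h0, Eco_zero] at hn
  exact hn rfl

lemma Eco_cone {g : Fin 3 → MvPolynomial (Fin 2) k} {p : MvPolynomial (Fin 2) K}
    (h : p ∈ coneRing (fun i => map (algebraMap k K) (g i))) (ε : K →ₗ[k] k) :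
    Eco ε p ∈ coneRing g := by
  have hcl : ∀ x ∈ Submonoid.closure (Set.range fun i => map (algebraMap k K) (g i)),
      ∃ w ∈ coneRing g, x = map (algebraMap k K) w := by
    intro x hx
    induction hx using Submonoid.closure_induction with
    | mem x hx =>
      obtain ⟨i, rfl⟩ := hx
      exact ⟨g i, Algebra.subset_adjoin ⟨i, rfl⟩, rfl⟩
    | one => exact ⟨1, one_mem _, by simp⟩
    | mul x y _ _ hx hy =>
      obtain ⟨w, hw, rfl⟩ := hx
      obtain ⟨w', hw', rfl⟩ := hy
      exact ⟨w * w', mul_mem hw hw', by simp⟩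
  have h' : p ∈ Submodule.span K
      (Submonoid.closure (Set.range fun i => map (algebraMap k K) (g i)) :
        Set (MvPolynomial (Fin 2) K)) := by
    rw [← Algebra.adjoin_eq_span]; exact h
  clear h
  induction h' using Submodule.span_induction generalizing ε with
  | mem x hx =>
    obtain ⟨w, hw, rfl⟩ := hcl x hx
    rw [Eco_map]
    exact Subalgebra.smul_mem _ hw _
  | zero => rw [Eco_zero]; exact zero_mem _
  | add x y _ _ hx hy => rw [Eco_add]; exact add_mem (hx ε) (hy ε)
  | smul c x _ hx => rw [Eco_smul]; exact hx _

lemma map_cone {g : Fin 3 → MvPolynomial (Fin 2) k} {p : MvPolynomial (Fin 2) k}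
    (h : p ∈ coneRing g) :
    map (algebraMap k K) p ∈ coneRing (fun i => map (algebraMap k K) (g i)) := by
  rw [coneRing] at h
  induction h using Algebra.adjoin_induction with
  | mem x hx =>
    obtain ⟨i, rfl⟩ := hx
    exact Algebra.subset_adjoin ⟨i, rfl⟩
  | algebraMap r =>
    rw [algebraMap_eq, map_C, ← algebraMap_eq]
    exact Subalgebra.algebraMap_mem _ _
  | add x y _ _ hx hy => rw [map_add]; exact add_mem hx hy
  | mul x y _ _ hx hy => rw [map_mul]; exact mul_mem hx hy

/-- expansion along a basis of `K/k` -/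
lemma Eco_expand (p : MvPolynomial (Fin 2) K) :
    ∃ (ι : Type uK) (s : Finset ι) (b : ι → K) (ε : ι → (K →ₗ[k] k)),
      p = ∑ i ∈ s, b i • map (algebraMap k K) (Eco (ε i) p) := by
  classical
  let b := Module.Basis.ofVectorSpace k K
  refine ⟨_, p.support.biUnion (fun m => (b.repr (coeff m p)).support), b, fun i => b.coord i, ?_⟩
  ext m
  rw [coeff_sum]
  simp only [coeff_smul, coeff_map, coeff_Eco, Module.Basis.coord_apply, smul_eq_mul]
  conv_lhs => rw [← b.linearCombination_repr (coeff m p)]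
  rw [Finsupp.linearCombination_apply, Finsupp.sum]
  simp only [Algebra.smul_def, mul_comm (algebraMap k K _)]
  apply Finset.sum_subset
  · intro i hi
    rw [Finset.mem_biUnion]
    refine ⟨m, ?_, hi⟩
    rw [mem_support_iff]
    intro h0
    rw [h0] at hi
    simp at hi
  · intro i _ hi
    rw [Finsupp.notMem_support_iff.mp hi, map_zero, mul_zero]

lemma finrank_bc (U : Submodule k (MvPolynomial (Fin 2) k)) [Module.Finite k U]
    (U' : Submodule K (MvPolynomial (Fin 2) K))
    (h1 : ∀ u ∈ U, map (algebraMap k K) u ∈ U') (h2 : ∀ ε : K →ₗ[k] k, ∀ u ∈ U', Eco ε u ∈ U) :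
    Module.finrank K U' = Module.finrank k U := by
  have : Module.Free k U := Module.Free.of_divisionRing k U
  let b := Module.finBasis k U
  let u : Fin (Module.finrank k U) → MvPolynomial (Fin 2) K :=
    fun i => map (algebraMap k K) (b i : MvPolynomial (Fin 2) k)
  have hli : LinearIndependent K u := by
    rw [Fintype.linearIndependent_iff]
    intro c hc i
    rw [← Module.forall_dual_apply_eq_zero_iff k (c i)]
    intro ε
    have h := congrArg (Eco ε) hc
    rw [Eco_zero, Eco_sum] at h
    have h3 : ∑ i, ε (c i) • b i = 0 := by
      apply Subtype.ext
      rw [AddSubmonoidClass.coe_finsetSum]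
      refine Eq.trans (Finset.sum_congr rfl fun j _ => ?_) h
      simp only [u]
      rw [Eco_smul, Eco_map]
      simp
    exact Fintype.linearIndependent_iff.mp b.linearIndependent _ h3 i
  have hsp : U' = Submodule.span K (Set.range u) := by
    apply le_antisymm
    · intro p hp
      obtain ⟨ι, s, bb, ε, e⟩ := Eco_expand (k := k) p
      rw [e]
      refine Submodule.sum_mem _ fun i _ => Submodule.smul_mem _ _ ?_
      have hu := h2 (ε i) p hp
      have e2 := congrArg Subtype.val (b.sum_repr ⟨_, hu⟩)
      rw [AddSubmonoidClass.coe_finsetSum] at e2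
      simp only [] at e2
      rw [← e2, map_sum]
      refine Submodule.sum_mem _ fun j _ => ?_
      have e3 : map (algebraMap k K) ((b.repr ⟨_, hu⟩ j • b j : U) : MvPolynomial (Fin 2) k) =
          algebraMap k K (b.repr ⟨_, hu⟩ j) • u j := by
        rw [Submodule.coe_smul, smul_eq_C_mul, map_mul, map_C, ← smul_eq_C_mul]
      rw [e3]
      exact Submodule.smul_mem _ _ (Submodule.subset_span ⟨j, rfl⟩)
    · rw [Submodule.span_le]
      rintro _ ⟨i, rfl⟩
      exact h1 _ (b i).2
  rw [hsp, finrank_span_eq_card hli, Fintype.card_fin]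

lemma finrank_coneN_bc (g : Fin 3 → MvPolynomial (Fin 2) k) (d n : ℕ) :
    Module.finrank K (coneN (fun i => map (algebraMap k K) (g i)) d n) =
      Module.finrank k (coneN g d n) := by
  apply finrank_bc
  · rintro u ⟨h1, h2⟩
    exact ⟨map_cone h1, IsHomogeneous.map h2 _⟩
  · rintro ε u ⟨h1, h2⟩
    exact ⟨Eco_cone h1 ε, Eco_hom ε h2⟩

lemma mul_mem_bc {g : Fin 3 → MvPolynomial (Fin 2) k} {v : MvPolynomial (Fin 2) k}
    {w : MvPolynomial (Fin 2) K} (h : ∀ ε : K →ₗ[k] k, v * Eco ε w ∈ coneRing g) :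
    map (algebraMap k K) v * w ∈ coneRing (fun i => map (algebraMap k K) (g i)) := by
  obtain ⟨ι, s, bb, ε, e⟩ := Eco_expand (k := k) w
  rw [e, Finset.mul_sum]
  refine sum_mem fun i _ => ?_
  rw [mul_smul_comm, ← map_mul]
  exact Subalgebra.smul_mem _ (map_cone (h _)) _

lemma finrank_condN_bc (g : Fin 3 → MvPolynomial (Fin 2) k) (d n : ℕ) :
    Module.finrank K (condN (fun i => map (algebraMap k K) (g i)) d n) =
      Module.finrank k (condN g d n) := by
  apply finrank_bc
  · rintro u ⟨h1, h2⟩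
    exact ⟨IsHomogeneous.map h1 _, fun w hw => mul_mem_bc fun ε => h2 _ (Eco_veronese ε hw)⟩
  · rintro ε u ⟨h1, h2⟩
    refine ⟨Eco_hom ε h1, fun w hw => ?_⟩
    rw [← Eco_mul_map]
    refine Eco_cone (h2 _ ?_) ε
    rw [mem_veronese_iff] at hw ⊢
    intro m hm
    apply hw
    intro h0
    apply hm
    ext x
    rw [coeff_homogeneousComponent, coeff_map]
    have := congrArg (coeff x) h0
    rw [coeff_homogeneousComponent] at this
    split_ifs at * with hx
    · rw [this]; simp
    · rfl

lemma common_denom {g : Fin 3 → MvPolynomial (Fin 2) k} {d : ℕ}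
    (hbir : ∀ v ∈ veronese k d,
      ∃ x ∈ coneRing g, ∃ y ∈ coneRing g, y ≠ 0 ∧ y * v = x) :
    ∃ a ∈ coneRing g, a ≠ 0 ∧ ∀ v : MvPolynomial (Fin 2) k, v.IsHomogeneous d →
      a * v ∈ coneRing g := by
  classical
  obtain ⟨s, hs⟩ := homogeneousSubmodule_fg (Fin 2) k d
  have key : ∀ t : Finset (MvPolynomial (Fin 2) k), (∀ v ∈ t, v ∈ veronese k d) →
      ∃ a ∈ coneRing g, a ≠ 0 ∧ ∀ v ∈ t, a * v ∈ coneRing g := by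
    intro t
    induction t using Finset.induction_on with
    | empty => intro _; exact ⟨1, one_mem _, one_ne_zero, by simp⟩
    | insert x t hx ih =>
      intro h
      obtain ⟨a, ha, ha0, hat⟩ := ih (fun v hv => h v (Finset.mem_insert_of_mem hv))
      obtain ⟨p, hp, q, hq, hq0, e⟩ := hbir x (h x (Finset.mem_insert_self _ _))
      refine ⟨a * q, mul_mem ha hq, mul_ne_zero ha0 hq0, fun v hv => ?_⟩
      rcases Finset.mem_insert.mp hv with rfl | hv
      · rw [mul_assoc, e]; exact mul_mem ha hp
      · rw [mul_right_comm]; exact mul_mem (hat v hv) hq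
  obtain ⟨a, ha, ha0, hat⟩ := key s (fun v hv => Hf_le_veronese (m := 1) (by
    rw [one_mul]
    have : v ∈ homogeneousSubmodule (Fin 2) k d := hs ▸ Submodule.subset_span hv
    exact this))
  refine ⟨a, ha, ha0, fun v hv => ?_⟩
  have hv' : v ∈ Submodule.span k (s : Set (MvPolynomial (Fin 2) k)) := by rw [hs]; exact hv
  have : Submodule.span k (s : Set (MvPolynomial (Fin 2) k)) ≤
      (Subalgebra.toSubmodule (coneRing g)).comap (LinearMap.mulLeft k a) := by
    rw [Submodule.span_le]; exact hat
  exact this hv'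

/-- The three dimension estimates over any field. -/
lemma dims_any {D : ℕ} (hD : 1 ≤ D) {g : Fin 3 → MvPolynomial (Fin 2) k}
    (hg : ∀ i, (g i).IsHomogeneous (D + 1)) {N : ℕ}
    (hN : Mxy k ^ N ≤ Ideal.span (Set.range g)) {a : MvPolynomial (Fin 2) k}
    (ha0 : a ≠ 0) (haA : a ∈ coneRing g)
    (ha : ∀ v : MvPolynomial (Fin 2) k, v.IsHomogeneous (D + 1) → a * v ∈ coneRing g) :
    (∀ n, D ≤ n → Module.finrank k (coneN g (D + 1) n) + D.choose 2 = n * (D + 1) + 1) ∧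
    D ≤ Module.finrank k (condN g (D + 1) (D - 1)) ∧
    (∀ n, D ≤ n → Module.finrank k (condN g (D + 1) n) + D * (D - 1) ≤ n * (D + 1) + 1) := by
  have hM : (Mxy k).map (map (algebraMap k (AlgebraicClosure k))) = Mxy (AlgebraicClosure k) := by
    rw [Mxy, Mxy, Ideal.map_span, Set.image_pair, map_X, map_X]
  have hN' : Mxy (AlgebraicClosure k) ^ N ≤
      Ideal.span (Set.range fun i => map (algebraMap k (AlgebraicClosure k)) (g i)) := by
    have := Ideal.map_mono (f := map (algebraMap k (AlgebraicClosure k))) hN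
    rw [Ideal.map_pow, hM, Ideal.map_span, ← Set.range_comp] at this
    exact this
  have := dims_infinite (k := AlgebraicClosure k) hD
    (g := fun i => map (algebraMap k (AlgebraicClosure k)) (g i))
    (fun i => (hg i).map _) hN' (a := map (algebraMap k (AlgebraicClosure k)) a)
    (by
      intro h
      apply ha0
      apply map_injective _ (algebraMap k (AlgebraicClosure k)).injective
      rw [h, map_zero])
    (map_cone haA)
    (fun v hv => mul_mem_bc fun ε => ha _ (Eco_hom ε hv))
  simpa only [finrank_coneN_bc, finrank_condN_bc] using this

end basechange

set_option linter.style.haveILetI false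
set_option linter.unusedVariables false
open MvPolynomial

section gcdstep
variable {k : Type*} [Field k]
attribute [local instance] MvPolynomial.gradedAlgebra

lemma span_hom {W : Set (MvPolynomial (Fin 2) k)} {r : ℕ} (hW : ∀ w ∈ W, w.IsHomogeneous r) :
    (Ideal.span W).IsHomogeneous (homogeneousSubmodule (Fin 2) k) :=
  Ideal.homogeneous_span _ _ fun w hw => ⟨r, hW w hw⟩

lemma mem_span_forms {W : Set (MvPolynomial (Fin 2) k)} {r M : ℕ}
    (hW : ∀ w ∈ W, w.IsHomogeneous r) {f : MvPolynomial (Fin 2) k} (hf : f.IsHomogeneous (r + M))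
    (h : f ∈ Ideal.span W) :
    f ∈ Submodule.span k {u | ∃ w ∈ W, ∃ c : MvPolynomial (Fin 2) k,
      c.IsHomogeneous M ∧ u = w * c} := by
  have key : ∀ f ∈ Ideal.span W, homogeneousComponent (r + M) f ∈ 
      Submodule.span k {u | ∃ w ∈ W, ∃ c : MvPolynomial (Fin 2) k,
        c.IsHomogeneous M ∧ u = w * c} := by
    intro f hf
    have hf' : f ∈ Submodule.span (MvPolynomial (Fin 2) k) W := hf
    induction hf' using Submodule.closure_induction with
    | zero => rw [map_zero]; exact zero_mem _
    | add x y _ _ hx hy =>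
      rw [map_add]
      exact add_mem (hx (by assumption)) (hy (by assumption))
    | smul_mem c x hx =>
      rw [smul_eq_mul, mul_comm, hc_mul_left (hW x hx)]
      exact Submodule.subset_span ⟨x, hx, _, homogeneousComponent_isHomogeneous _ _, rfl⟩
  have := key f h
  rwa [hc_of_hom hf, if_pos rfl] at this

lemma Hf_le_Mxy_pow {n N : ℕ} (h : N ≤ n) {f : MvPolynomial (Fin 2) k} (hf : f.IsHomogeneous n) :
    f ∈ Mxy k ^ N := by
  refine Ideal.pow_le_pow_right h ?_
  clear h
  induction n generalizing f with
  | zero => rw [pow_zero, Ideal.one_eq_top]; trivial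
  | succ n ih =>
    obtain ⟨a, b, ha, hb, rfl⟩ := Hf_split hf
    rw [pow_succ']
    exact add_mem (Ideal.mul_mem_mul (Ideal.subset_span (by simp)) (ih ha))
      (Ideal.mul_mem_mul (Ideal.subset_span (by simp)) (ih hb))

lemma height_step {g : Fin 3 → MvPolynomial (Fin 2) k} {d : ℕ} (hg : ∀ i, (g i).IsHomogeneous d)
    (hht : (⨅ (P : PrimeSpectrum (MvPolynomial (Fin 2) k))
      (_ : Ideal.span (Set.range g) ≤ P.asIdeal), Order.height P) = 2) :
    ∃ N, Mxy k ^ N ≤ Ideal.span (Set.range g) := by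
  have hP : ∀ P : PrimeSpectrum (MvPolynomial (Fin 2) k), Ideal.span (Set.range g) ≤ P.asIdeal →
      2 ≤ Order.height P := by
    intro P h
    rw [← hht]
    exact iInf₂_le P h
  apply lemma_P _ (span_hom (by rintro _ ⟨i, rfl⟩; exact hg i))
  · intro h0
    have := hP ⊥ (by rw [h0]; exact bot_le)
    rw [Order.height_bot] at this
    simp at this
  · intro p m _ hp hle
    have hpr : (Ideal.span {p}).IsPrime := (Ideal.span_singleton_prime hp.ne_zero).mpr hp
    have := hP ⟨Ideal.span {p}, hpr⟩ hle
    have h1 : (Ideal.span {p}).height ≤ 1 := by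
      apply Ideal.height_le_one_of_isPrincipal_of_mem_minimalPrimes (Ideal.span {p})
      rw [Ideal.minimalPrimes_eq_subsingleton_self]; rfl
    have h1 := h1
    rw [show Ideal.span {p} = (⟨Ideal.span {p}, hpr⟩ : PrimeSpectrum _).asIdeal from rfl,
      PrimeSpectrum.height_eq_orderHeight] at h1
    have := this.trans h1
    exact absurd this (by decide)

lemma dvd_of_dvd_both {h v : MvPolynomial (Fin 2) k} (hh : h ≠ 0) {M : ℕ} (h0 : h ∣ v * X 0 ^ M)
    (h1 : h ∣ v * X 1 ^ M) : h ∣ v := by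
  obtain ⟨s, hs⟩ := h0
  obtain ⟨t, ht⟩ := h1
  have e : s * X 1 ^ M = t * X 0 ^ M := by
    apply mul_left_cancel₀ hh
    rw [← mul_assoc, ← mul_assoc, ← hs, ← ht]; ring
  have hrel : IsRelPrime ((X 0 : MvPolynomial (Fin 2) k) ^ M) (X 1 ^ M) := by
    apply IsRelPrime.pow
    refine WfDvdMonoid.isRelPrime_of_no_irreducible_factors (fun h => X_ne_zero _ h.1) ?_
    intro z hz hz0 hz1
    exact prime_not_dvd_both hz.prime hz0 hz1
  obtain ⟨s', rfl⟩ : X 0 ^ M ∣ s := hrel.dvd_of_dvd_mul_right (Dvd.intro_left _ e.symm)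
  refine ⟨s', ?_⟩
  apply mul_right_cancel₀ (pow_ne_zero M (X_ne_zero (R := k) (0 : Fin 2)))
  rw [hs]; ring

end gcdstep

set_option linter.style.haveILetI false
set_option linter.unusedVariables false
open MvPolynomial

section keystep
variable {k : Type*} [Field k]

lemma mulLeft_inj {h : MvPolynomial (Fin 2) k} (hh : h ≠ 0) :
    Function.Injective (LinearMap.mulLeft k h) := fun a b e => mul_left_cancel₀ hh e

lemma finrank_mul {h : MvPolynomial (Fin 2) k} (hh : h ≠ 0)
    (S : Submodule k (MvPolynomial (Fin 2) k)) :
    Module.finrank k (S.map (LinearMap.mulLeft k h)) = Module.finrank k S :=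
  (Submodule.equivMapOfInjective _ (mulLeft_inj hh) S).finrank_eq.symm

lemma condN_mul {g : Fin 3 → MvPolynomial (Fin 2) k} {d n m : ℕ} {v w : MvPolynomial (Fin 2) k}
    (hv : v ∈ condN g d n) (hw : w.IsHomogeneous (m * d)) : v * w ∈ condN g d (n + m) := by
  refine ⟨Hf_mul hv.1 hw (by ring), fun u hu => ?_⟩
  rw [mul_assoc]
  exact hv.2 _ (mul_mem (Hf_le_veronese hw) hu)

lemma condN_mul' {g : Fin 3 → MvPolynomial (Fin 2) k} {d n m N : ℕ} {v w : MvPolynomial (Fin 2) k}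
    (hv : v ∈ condN g d n) (hw : w.IsHomogeneous (m * d)) (h : n + m = N) :
    v * w ∈ condN g d N := h ▸ condN_mul hv hw

lemma mem_condN {g : Fin 3 → MvPolynomial (Fin 2) k} {d n : ℕ} {v : MvPolynomial (Fin 2) k} :
    v ∈ condN g d n ↔ v.IsHomogeneous (n * d) ∧ ∀ w ∈ veronese k d, v * w ∈ coneRing g := Iff.rfl

lemma exists_max_gcd {C : Submodule k (MvPolynomial (Fin 2) k)} {m : ℕ} (hC : C ≤ Hf k m)
    (h0 : C ≠ ⊥) : ∃ e ≤ m, ∃ h : MvPolynomial (Fin 2) k, h ≠ 0 ∧ h.IsHomogeneous e ∧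
      (∀ v ∈ C, h ∣ v) ∧ ∀ e' , ∀ h' : MvPolynomial (Fin 2) k, h' ≠ 0 → h'.IsHomogeneous e' →
      (∀ v ∈ C, h' ∣ v) → e' ≤ e := by
  classical
  let Q : ℕ → Prop := fun e => ∃ h : MvPolynomial (Fin 2) k, h ≠ 0 ∧ h.IsHomogeneous e ∧
      (∀ v ∈ C, h ∣ v)
  have hb : ∀ e, Q e → e ≤ m := by
    rintro e ⟨h, hh, he, hd⟩
    obtain ⟨v, hv, hv0⟩ := Submodule.exists_mem_ne_zero_of_ne_bot h0
    by_contra hlt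
    obtain ⟨w, rfl⟩ := hd v hv
    have := hc_of_hom (hC hv) m
    rw [hc_mul_left_lt he (by omega), if_pos rfl] at this
    exact hv0 this.symm
  have hQ0 : Q 0 := ⟨1, one_ne_zero, isHomogeneous_one _ _, fun v _ => one_dvd _⟩
  have hs := Nat.findGreatest_spec (P := Q) (Nat.zero_le m) hQ0
  obtain ⟨h, hh, he, hd⟩ := hs
  exact ⟨_, Nat.findGreatest_le m, h, hh, he, hd, fun e' h' a b c =>
    Nat.le_findGreatest (hb _ ⟨h', a, b, c⟩) ⟨h', a, b, c⟩⟩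

lemma key_cond {D : ℕ} (hD : 1 ≤ D) {g : Fin 3 → MvPolynomial (Fin 2) k}
    (hg : ∀ i, (g i).IsHomogeneous (D + 1))
    (h2 : D ≤ Module.finrank k (condN g (D + 1) (D - 1)))
    (h3 : ∀ n, D ≤ n → Module.finrank k (condN g (D + 1) n) + D * (D - 1) ≤ n * (D + 1) + 1) :
    ∃ h : MvPolynomial (Fin 2) k, h ≠ 0 ∧ h.IsHomogeneous (D * (D - 1)) ∧
      ∀ v ∈ veronese k (D + 1), ((∀ w ∈ veronese k (D + 1), v * w ∈ coneRing g) ↔ h ∣ v) := by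
  obtain ⟨E, rfl⟩ : ∃ E, D = E + 1 := ⟨D - 1, by omega⟩
  simp only [Nat.add_sub_cancel] at h3 ⊢
  change E + 1 ≤ Module.finrank k (condN g (E + 1 + 1) E) at h2
  have hC0 : condN g (E + 1 + 1) E ≠ ⊥ := by
    intro h0
    rw [h0, finrank_bot] at h2
    omega
  obtain ⟨e, hem, h, hh, he, hdv, hmax⟩ := exists_max_gcd (condN_le g (E + 1 + 1) E) hC0
  obtain ⟨r, hr⟩ := Nat.exists_eq_add_of_le hem
  -- cofactors
  let W : Submodule k (MvPolynomial (Fin 2) k) :=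
    Hf k r ⊓ (condN g (E + 1 + 1) E).comap (LinearMap.mulLeft k h)
  have hWmap : W.map (LinearMap.mulLeft k h) = condN g (E + 1 + 1) E := by
    apply le_antisymm
    · rintro _ ⟨w, hw, rfl⟩; exact hw.2
    · intro v hv
      obtain ⟨w, hw, rfl⟩ := exists_hom_cofactor he (hr ▸ hv.1) (hdv v hv)
      exact ⟨w, ⟨hw, hv⟩, rfl⟩
  have hWfin : Module.finrank k W = Module.finrank k (condN g (E + 1 + 1) E) := by
    rw [← hWmap, finrank_mul hh]
  have hWle : W ≤ Hf k r := inf_le_left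
  obtain ⟨N, hN⟩ : ∃ N, Mxy k ^ N ≤ Ideal.span (W : Set (MvPolynomial (Fin 2) k)) := by
    apply lemma_P _ (span_hom (r := r) fun w hw => hWle hw)
    · intro h0
      apply hC0
      rw [← hWmap, eq_bot_iff]
      rintro _ ⟨w, hw, rfl⟩
      have : w ∈ Ideal.span (W : Set (MvPolynomial (Fin 2) k)) := Ideal.subset_span hw
      rw [h0] at this
      rw [Ideal.mem_bot.mp this, map_zero]; exact zero_mem _
    · intro p m hpm hp hle
      have hm : 1 ≤ m := by
        by_contra hm
        have : m = 0 := by omega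
        subst this
        have hpC := (totalDegree_eq_zero_iff_eq_C (p := p)).mp
          (Nat.le_zero.mp hpm.totalDegree_le)
        have h0 : coeff 0 p ≠ 0 := by
          intro h0
          apply hp.ne_zero
          rw [hpC, h0, C_0]
        apply hp.not_isUnit
        rw [hpC]
        exact (isUnit_iff_ne_zero.mpr h0).map C
      have := hmax (e + m) (h * p) (mul_ne_zero hh hp.ne_zero) (he.mul hpm) (by
        intro v hv
        rw [← hWmap] at hv
        obtain ⟨w, hw, rfl⟩ := hv
        exact mul_dvd_mul_left h (Ideal.mem_span_singleton.mp (hle (Ideal.subset_span hw))))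
      omega
  have hbig : ∀ n, E ≤ n → N ≤ n → ∀ f : MvPolynomial (Fin 2) k,
      f.IsHomogeneous (r + (n - E) * (E + 1 + 1)) → N ≤ r + (n - E) * (E + 1 + 1) →
      h * f ∈ condN g (E + 1 + 1) n := by
    intro n hn1 hn2 f hf hNf
    have := mem_span_forms (fun w hw => hWle hw) hf (hN (Hf_le_Mxy_pow hNf hf))
    have hle : Submodule.span k {u | ∃ w ∈ (W : Set (MvPolynomial (Fin 2) k)),
        ∃ c : MvPolynomial (Fin 2) k, c.IsHomogeneous ((n - E) * (E + 1 + 1)) ∧ u = w * c} ≤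
        (condN g (E + 1 + 1) n).comap (LinearMap.mulLeft k h) := by
      rw [Submodule.span_le]
      rintro _ ⟨w, hw, c, hc, rfl⟩
      change h * (w * c) ∈ condN g (E + 1 + 1) n
      rw [← mul_assoc]
      exact condN_mul' hw.2 hc (by omega)
    exact hle this
  have hdim : r ≤ E := by
    have h4 := h3 (E + 1 + N) (by omega)
    have hsub : (Hf k (r + (1 + N) * (E + 1 + 1))).map (LinearMap.mulLeft k h) ≤
        condN g (E + 1 + 1) (E + 1 + N) := by
      rintro _ ⟨f, hf, rfl⟩
      refine hbig _ (by omega) (by omega) f ?_ ?_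
      · rw [show E + 1 + N - E = 1 + N by omega]; exact hf
      · rw [show E + 1 + N - E = 1 + N by omega]; nlinarith
    have h5 := Submodule.finrank_mono hsub
    rw [finrank_mul hh, finrank_Hf] at h5
    nlinarith
  have hre : r = E := by
    have := Submodule.finrank_mono hWle
    rw [hWfin, finrank_Hf] at this
    omega
  have hWtop : W = Hf k r := by
    apply Submodule.eq_of_le_of_finrank_le hWle
    rw [hWfin, finrank_Hf]; omega
  have hee : e = (E + 1) * E := by rw [hre] at hr; nlinarith
  subst hre
  have hhW : ∀ w : MvPolynomial (Fin 2) k, w.IsHomogeneous r → h * w ∈ condN g (r + 1 + 1) r := by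
    intro w hw
    have : w ∈ W := by rw [hWtop]; exact hw
    exact this.2
  -- products
  have hall : ∀ m, ∀ w : MvPolynomial (Fin 2) k, w.IsHomogeneous (r + m * (r + 1 + 1)) →
      h * w ∈ condN g (r + 1 + 1) (r + m) := by
    intro m w hw
    have hw2 : w ∈ Hf k r * Hf k (m * (r + 1 + 1)) := by
      have e1 : ∀ n, Hf k n = homogeneousSubmodule (Fin 2) k 1 ^ n := fun n => by
        rw [homogeneousSubmodule_one_pow]
      rw [e1 r, e1 (m * _), ← pow_add, homogeneousSubmodule_one_pow]
      exact hw
    have hle : Hf k r * Hf k (m * (r + 1 + 1)) ≤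
        (condN g (r + 1 + 1) (r + m)).comap (LinearMap.mulLeft k h) := by
      rw [Submodule.mul_le]
      intro a ha b hb
      change h * (a * b) ∈ condN g (r + 1 + 1) (r + m)
      rw [← mul_assoc]
      exact condN_mul (hhW a ha) hb
    exact hle hw2
  have hlarge : ∀ n, r + 1 ≤ n → ∀ v ∈ condN g (r + 1 + 1) n, h ∣ v := by
    intro n hn v hv
    obtain ⟨m, rfl⟩ := Nat.exists_eq_add_of_le (show r ≤ n by omega)
    have hsub : (Hf k (r + m * (r + 1 + 1))).map (LinearMap.mulLeft k h) ≤
        condN g (r + 1 + 1) (r + m) := by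
      rintro _ ⟨f, hf, rfl⟩; exact hall m f hf
    have heq := Submodule.eq_of_le_of_finrank_le hsub (by
      rw [finrank_mul hh, finrank_Hf]
      have := h3 (r + m) hn
      nlinarith)
    rw [← heq] at hv
    obtain ⟨f, -, rfl⟩ := hv
    exact dvd_mul_right _ _
  refine ⟨h, hh, hee ▸ he, fun v hv => ⟨fun hc => ?_, fun hdvd => ?_⟩⟩
  · rw [← sum_hc_of_le v _ (Nat.lt_succ_self _)]
    refine Finset.dvd_sum fun i _ => ?_
    by_cases h0 : homogeneousComponent i v = 0
    · rw [h0]; exact dvd_zero _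
    obtain ⟨n, rfl⟩ := mem_veronese_iff.mp hv i h0
    have hvn : homogeneousComponent ((r + 1 + 1) * n) v ∈ condN g (r + 1 + 1) n :=
      ⟨by rw [mul_comm]; exact homogeneousComponent_isHomogeneous _ _,
        cond_hc (by omega) hg hc _⟩
    apply dvd_of_dvd_both hh (M := (r + 1) * (r + 1 + 1))
    · exact hlarge (n + (r + 1)) (by omega) _ (condN_mul hvn (by
        have := (isHomogeneous_X k (0 : Fin 2)).pow ((r + 1) * (r + 1 + 1))
        rwa [one_mul] at this))
    · exact hlarge (n + (r + 1)) (by omega) _ (condN_mul hvn (by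
        have := (isHomogeneous_X k (1 : Fin 2)).pow ((r + 1) * (r + 1 + 1))
        rwa [one_mul] at this))
  · have hcomp : ∀ i, ∀ w ∈ veronese k (r + 1 + 1), homogeneousComponent i v * w ∈ coneRing g := by
      intro i
      by_cases h0 : homogeneousComponent i v = 0
      · intro w _; rw [h0, zero_mul]; exact zero_mem _
      obtain ⟨n, rfl⟩ := mem_veronese_iff.mp hv i h0
      have hdv2 := dvd_hc he hdvd ((r + 1 + 1) * n)
      have hge : e ≤ (r + 1 + 1) * n := by
        by_contra hlt
        apply h0
        obtain ⟨w, rfl⟩ := hdvd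
        exact hc_mul_left_lt he (by omega)
      have hrn : r ≤ n := by
        by_contra hlt
        have : n + 1 ≤ r := by omega
        have h6 : (r + 1 + 1) * (n + 1) ≤ (r + 1 + 1) * r := Nat.mul_le_mul_left _ this
        nlinarith
      obtain ⟨m, rfl⟩ := Nat.exists_eq_add_of_le hrn
      obtain ⟨w, hw, hvw⟩ := exists_hom_cofactor (n := r + m * (r + 1 + 1)) he (by
        have := homogeneousComponent_isHomogeneous ((r + 1 + 1) * (r + m)) v
        convert this using 1
        rw [hee]; ring) hdv2
      rw [hvw]
      exact (hall m w hw).2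
    intro w hw
    rw [← sum_hc_of_le v _ (Nat.lt_succ_self _), Finset.sum_mul]
    exact sum_mem fun i _ => hcomp i w hw

end keystep

set_option linter.style.haveILetI false
set_option linter.unusedVariables false

section lengths

lemma length_restrict {k R N : Type*} [Field k] [CommRing R] [Algebra k R] [AddCommGroup N]
    [Module R N] [Module k N] [IsScalarTower k R N] (J : Ideal R)
    (hJ : ∀ r : R, ∃ c : k, r - algebraMap k R c ∈ J) (hN : ∀ r ∈ J, ∀ x : N, r • x = 0)
    [Module.Finite k N] :
    Module.length R N = Module.finrank k N := by
  have hs : ∀ (r : R), ∃ c : k, ∀ x : N, r • x = c • x := by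
    intro r
    obtain ⟨c, hc⟩ := hJ r
    refine ⟨c, fun x => ?_⟩
    have := hN _ hc x
    rwa [sub_smul, algebraMap_smul, sub_eq_zero] at this
  let e : Submodule R N ≃o Submodule k N :=
    { toFun := fun p => p.restrictScalars k
      invFun := fun p =>
        { carrier := p
          add_mem' := p.add_mem
          zero_mem' := p.zero_mem
          smul_mem' := by
            intro r x hx
            obtain ⟨c, hc⟩ := hs r
            rw [hc]
            exact p.smul_mem c hx }
      left_inv := fun p => by ext x; rfl
      right_inv := fun p => by ext x; rfl
      map_rel_iff' := Iff.rfl }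
  rw [← Module.length_eq_finrank]
  apply WithBot.coe_injective
  rw [Module.coe_length, Module.coe_length, Order.krullDim_eq_of_orderIso e]

lemma length_step {k R U : Type*} [Field k] [CommRing R] [Algebra k R] (J : Ideal R)
    (hJ : ∀ r : R, ∃ c : k, r - algebraMap k R c ∈ J) (n : ℕ)
    [AddCommGroup U] [Module k U] [Module.Finite k U] (φ : U →ₗ[k] R)
    (h1 : ∀ u, φ u ∈ J ^ n) (h2 : ∀ r ∈ J ^ n, ∃ u, r - φ u ∈ J ^ (n + 1)) (a : ℕ)
    (ha : Module.finrank k (((J ^ (n + 1)).restrictScalars k).comap φ) + a =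
      Module.finrank k U) :
    Module.length R (R ⧸ J ^ (n + 1)) = a + Module.length R (R ⧸ J ^ n) := by
  let π : R →ₗ[R] R ⧸ J ^ (n + 1) := (J ^ (n + 1)).mkQ
  let N : Submodule R (R ⧸ J ^ (n + 1)) := Submodule.map π (J ^ n)
  let ψ : U →ₗ[k] N := LinearMap.codRestrict (N.restrictScalars k) ((π.restrictScalars k) ∘ₗ φ)
    (fun u => ⟨φ u, h1 u, rfl⟩)
  have hψ : Function.Surjective ψ := by
    rintro ⟨_, r, hr, rfl⟩
    obtain ⟨u, hu⟩ := h2 r hr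
    refine ⟨u, Subtype.ext ?_⟩
    exact ((Submodule.Quotient.eq _).mpr hu).symm
  have hfin : Module.Finite k N := Module.Finite.of_surjective ψ hψ
  have hker : LinearMap.ker ψ = ((J ^ (n + 1)).restrictScalars k).comap φ := by
    ext u
    rw [LinearMap.mem_ker, Subtype.ext_iff]
    exact Submodule.Quotient.mk_eq_zero _
  have hrank := LinearMap.finrank_range_add_finrank_ker ψ
  rw [LinearMap.range_eq_top.mpr hψ, finrank_top, hker] at hrank
  have hNa : Module.finrank k N = a := by omega
  have hNl : Module.length R N = a := by
    rw [length_restrict (k := k) J hJ, hNa]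
    rintro r hr ⟨_, s, hs, rfl⟩
    apply Subtype.ext
    change r • π s = 0
    rw [← map_smul]
    exact (Submodule.Quotient.mk_eq_zero _).mpr (by
      rw [pow_succ', smul_eq_mul]; exact Ideal.mul_mem_mul hr hs)
  rw [← hNl, ← (Submodule.quotientQuotientEquivQuotient (J ^ (n + 1)) (J ^ n)
    (Ideal.pow_le_pow_right (Nat.le_succ n))).length_eq]
  exact Module.length_eq_add_of_exact N.subtype N.mkQ N.injective_subtype N.mkQ_surjective
    (LinearMap.exact_subtype_mkQ N)

lemma tendsto_len {len : ℕ → ℕ} {n0 e : ℕ} (h : ∀ n, n0 ≤ n → len (n + 1) = e + len n) :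
    Filter.Tendsto (fun n : ℕ => (len n : ℝ) / (n : ℝ)) Filter.atTop (nhds (e : ℝ)) := by
  have h1 : ∀ m, len (n0 + m) = len n0 + m * e := by
    intro m
    induction m with
    | zero => simp
    | succ m ih => rw [← add_assoc, h _ (by omega), ih]; ring
  have h2 : Filter.Tendsto (fun n : ℕ => (e : ℝ) + ((len n0 : ℝ) - n0 * e) / (n : ℝ)) Filter.atTop
      (nhds ((e : ℝ) + 0)) :=
    Filter.Tendsto.add tendsto_const_nhds (tendsto_const_div_atTop_nhds_zero_nat _)
  rw [add_zero] at h2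
  refine h2.congr' ?_
  filter_upwards [Filter.eventually_ge_atTop (n0 + 1)] with n hn
  obtain ⟨m, rfl⟩ := Nat.exists_eq_add_of_le (show n0 ≤ n by omega)
  rw [h1]
  have : ((n0 + m : ℕ) : ℝ) ≠ 0 := by
    rw [Nat.cast_ne_zero]; omega
  field_simp
  push_cast
  ring

end lengths

set_option linter.style.haveILetI false
set_option linter.unusedVariables false
open MvPolynomial

section hs
variable {k : Type*} [Field k]

/-- The ideal generated by the degree one generators. -/
noncomputable def irrel (G : Subalgebra k (MvPolynomial (Fin 2) k))
    (T : Set (MvPolynomial (Fin 2) k)) : Ideal G :=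
  Ideal.span {v : G | (v : MvPolynomial (Fin 2) k) ∈ T}

lemma irrel_pow_low {G : Subalgebra k (MvPolynomial (Fin 2) k)}
    {T : Set (MvPolynomial (Fin 2) k)} {d : ℕ} (hT : ∀ f ∈ T, f.IsHomogeneous d) (n : ℕ)
    (v : G) (hv : v ∈ irrel G T ^ n) {i : ℕ} (hi : i < n * d) :
    homogeneousComponent i (v : MvPolynomial (Fin 2) k) = 0 := by
  induction n generalizing v i with
  | zero => omega
  | succ n ih =>
    rw [pow_succ', irrel] at hv
    have hv2 : v ∈ (Ideal.span {v : G | (v : MvPolynomial (Fin 2) k) ∈ T}) • (irrel G T ^ n) := hv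
    refine Submodule.smul_induction_on hv2 ?_ ?_
    · intro r hr u hu
      have hr' : r ∈ Submodule.span G {v : G | (v : MvPolynomial (Fin 2) k) ∈ T} := hr
      clear hv hv2
      induction hr' using Submodule.closure_induction with
      | zero => simp
      | add x y _ _ hx hy =>
        rw [add_smul, Subalgebra.coe_add, map_add, hx (by assumption), hy (by assumption), add_zero]
      | smul_mem c x hx =>
        rw [smul_eq_mul, smul_eq_mul, Subalgebra.coe_mul, Subalgebra.coe_mul,
          mul_comm (c : MvPolynomial (Fin 2) k), mul_assoc]
        by_cases hid : i < d
        · exact hc_mul_left_lt (hT _ hx) hid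
        · obtain ⟨j, rfl⟩ := Nat.exists_eq_add_of_le (not_lt.mp hid)
          rw [hc_mul_left (hT _ hx), ← Subalgebra.coe_mul, ih (c * u) (Ideal.mul_mem_left _ _ hu),
            mul_zero]
          rw [Nat.succ_mul] at hi
          omega
    · intro x y hx hy
      rw [Subalgebra.coe_add, map_add, hx, hy, add_zero]

lemma irrel_pow_high {G : Subalgebra k (MvPolynomial (Fin 2) k)}
    {T : Set (MvPolynomial (Fin 2) k)} {d : ℕ} (hd : 1 ≤ d) (hT : ∀ f ∈ T, f.IsHomogeneous d)
    (hG : G = Algebra.adjoin k T) (n : ℕ) (v : G)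
    (hv : ∀ i, i < n * d → homogeneousComponent i (v : MvPolynomial (Fin 2) k) = 0) :
    v ∈ irrel G T ^ n := by
  have hcl : ∀ f ∈ Submonoid.closure T, ∃ m, f.IsHomogeneous (m * d) ∧
      ∃ u ∈ irrel G T ^ m, (u : MvPolynomial (Fin 2) k) = f := by
    intro f hf
    induction hf using Submonoid.closure_induction with
    | mem x hx =>
      refine ⟨1, by simpa using hT x hx, ⟨x, by rw [hG]; exact Algebra.subset_adjoin hx⟩, ?_, rfl⟩
      rw [pow_one]; exact Ideal.subset_span hx
    | one => exact ⟨0, by simpa using isHomogeneous_one _ _, 1, by simp, rfl⟩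
    | mul x y _ _ hx hy =>
      obtain ⟨m, hm, u, hu, hu'⟩ := hx
      obtain ⟨m', hm', u', hu2, hu2'⟩ := hy
      refine ⟨m + m', Hf_mul hm hm' (by ring), u * u', ?_, ?_⟩
      · rw [pow_add]; exact Ideal.mul_mem_mul hu hu2
      · rw [Subalgebra.coe_mul, hu', hu2']
  -- components of high degree are in the power
  have key : ∀ x ∈ G, ∀ i, n * d ≤ i → homogeneousComponent i x ∈
      ((irrel G T ^ n).restrictScalars k).map G.val.toLinearMap := by
    intro x hx i hi
    have hx' : x ∈ Submodule.span k (Submonoid.closure T : Set (MvPolynomial (Fin 2) k)) := by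
      rw [← Algebra.adjoin_eq_span, ← hG]; exact hx
    clear hx
    induction hx' using Submodule.span_induction with
    | mem x hx =>
      obtain ⟨m, hm, u, hu, rfl⟩ := hcl x hx
      rw [hc_of_hom hm]
      split_ifs with h
      · refine ⟨u, Ideal.pow_le_pow_right ?_ hu, rfl⟩
        rw [h] at hi
        exact Nat.le_of_mul_le_mul_right hi hd
      · exact zero_mem _
    | zero => rw [map_zero]; exact zero_mem _
    | add x y _ _ hx hy => rw [map_add]; exact add_mem hx hy
    | smul a x _ hx => rw [map_smul]; exact Submodule.smul_mem _ _ hx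
  have : (v : MvPolynomial (Fin 2) k) ∈
      ((irrel G T ^ n).restrictScalars k).map G.val.toLinearMap := by
    rw [← sum_hc_of_le (v : MvPolynomial (Fin 2) k) _ (Nat.lt_succ_self _)]
    refine Submodule.sum_mem _ fun i _ => ?_
    by_cases hi : i < n * d
    · rw [hv i hi]; exact zero_mem _
    · exact key _ v.2 i (not_lt.mp hi)
  obtain ⟨u, hu, e⟩ := this
  rw [← show u = v from Subtype.ext e]
  exact hu

lemma hs_abs {S : Type*} [CommRing S] [Algebra k S] (m I : Ideal S)
    (hk : ∀ s : S, ∃ c : k, s - algebraMap k S c ∈ m) (U : ℕ → Submodule k S)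
    (hfin : ∀ n, Module.Finite k (U n))
    (h1 : ∀ n, ∀ x ∈ U n, x ∈ m ^ n) (h2 : ∀ n, ∀ u ∈ m ^ n, ∃ x ∈ U n, u - x ∈ m ^ (n + 1))
    (h3 : ∀ n, ∀ x ∈ U n, ∀ w ∈ m ^ (n + 1), x - w ∈ I → x ∈ I) (e n0 : ℕ)
    (hdim : ∀ n, n0 ≤ n → Module.finrank k (U n ⊓ I.restrictScalars k : Submodule k S) + e =
      Module.finrank k (U n)) :
    IsHSMultOfDimOne (S ⧸ I) (m.map (Ideal.Quotient.mk I)) e := by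
  set J := m.map (Ideal.Quotient.mk I) with hJdef
  have hJn : ∀ n, J ^ n = (m ^ n).map (Ideal.Quotient.mk I) := fun n => by
    rw [hJdef, Ideal.map_pow]
  have memJ : ∀ n (v : S), Ideal.Quotient.mk I v ∈ J ^ n ↔ ∃ u ∈ m ^ n, v - u ∈ I := by
    intro n v
    rw [hJn, Ideal.mem_map_iff_of_surjective _ Ideal.Quotient.mk_surjective]
    constructor
    · rintro ⟨u, hu, e⟩; exact ⟨u, hu, Ideal.Quotient.eq.mp e.symm⟩
    · rintro ⟨u, hu, e⟩; exact ⟨u, hu, (Ideal.Quotient.eq.mpr e).symm⟩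
  have hk : ∀ r : S ⧸ I, ∃ c : k, r - algebraMap k (S ⧸ I) c ∈ J := by
    intro r
    obtain ⟨v, rfl⟩ := Ideal.Quotient.mk_surjective r
    obtain ⟨c, hc⟩ := hk v
    exact ⟨c, Ideal.mem_map_of_mem _ hc⟩
  have hstep : ∀ n a, Module.finrank k (U n ⊓ I.restrictScalars k : Submodule k S) + a =
      Module.finrank k (U n) →
      Module.length (S ⧸ I) ((S ⧸ I) ⧸ J ^ (n + 1)) = a + Module.length (S ⧸ I) ((S ⧸ I) ⧸ J ^ n) := by
    intro n a ha
    have := hfin n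
    let φ : U n →ₗ[k] S ⧸ I := (Ideal.Quotient.mkₐ k I).toLinearMap ∘ₗ (U n).subtype
    have hφ : ∀ u : U n, φ u = Ideal.Quotient.mk I u.1 := fun u => rfl
    refine length_step (k := k) (U := U n) J hk n φ ?_ ?_ a ?_
    · intro u
      rw [hφ, memJ]
      exact ⟨u.1, h1 n _ u.2, by rw [sub_self]; exact zero_mem _⟩
    · intro r hr
      obtain ⟨v, rfl⟩ := Ideal.Quotient.mk_surjective r
      obtain ⟨u, hu, huv⟩ := (memJ n v).mp hr
      obtain ⟨x, hx, hxu⟩ := h2 n u hu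
      refine ⟨⟨x, hx⟩, ?_⟩
      rw [hφ, ← map_sub, memJ]
      refine ⟨u - x, hxu, ?_⟩
      convert huv using 1
      ring
    · rw [← ha]
      congr 1
      have : (U n ⊓ I.restrictScalars k : Submodule k S) =
          (((J ^ (n + 1)).restrictScalars k).comap φ).map (U n).subtype := by
        ext v
        constructor
        · rintro ⟨hv1, hv2⟩
          refine ⟨⟨v, hv1⟩, ?_, rfl⟩
          change φ _ ∈ J ^ (n + 1)
          rw [hφ, memJ]
          exact ⟨0, zero_mem _, by rw [sub_zero]; exact hv2⟩
        · rintro ⟨u, hu, rfl⟩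
          refine ⟨u.2, ?_⟩
          change φ _ ∈ J ^ (n + 1) at hu
          rw [hφ, memJ] at hu
          obtain ⟨w, hw, hw2⟩ := hu
          exact h3 n _ u.2 w hw hw2
      rw [this, Submodule.finrank_map_subtype_eq]
  have hex : ∀ n, ∃ l : ℕ, Module.length (S ⧸ I) ((S ⧸ I) ⧸ J ^ n) = l := by
    intro n
    induction n with
    | zero =>
      refine ⟨0, ?_⟩
      rw [pow_zero, Ideal.one_eq_top]
      rw [Nat.cast_zero]
      exact Module.length_eq_zero_iff.mpr (Ideal.Quotient.subsingleton_iff.mpr rfl)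
    | succ n ih =>
      obtain ⟨l, hl⟩ := ih
      have := hfin n
      obtain ⟨a, ha⟩ := Nat.exists_eq_add_of_le (Submodule.finrank_mono
        (inf_le_left : (U n ⊓ I.restrictScalars k : Submodule k S) ≤ U n))
      refine ⟨a + l, ?_⟩
      rw [hstep n a ha.symm, hl, Nat.cast_add]
  choose len hlen using hex
  refine ⟨len, fun n => ?_, tendsto_len (n0 := n0) fun n hn => ?_⟩
  · rw [← Module.coe_length, hlen]
  · have := hstep n e (hdim n hn)
    rw [hlen, hlen] at this
    exact_mod_cast this

lemma hs_mult {G : Subalgebra k (MvPolynomial (Fin 2) k)}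
    {T : Set (MvPolynomial (Fin 2) k)} {d : ℕ} (hd : 1 ≤ d) (hT : ∀ f ∈ T, f.IsHomogeneous d)
    (hG : G = Algebra.adjoin k T) {h : MvPolynomial (Fin 2) k} {m : ℕ} (hh : h.IsHomogeneous m)
    (I : Ideal G) (hI : ∀ v : G, v ∈ I ↔ h ∣ (v : MvPolynomial (Fin 2) k)) (e n0 : ℕ)
    (C : ℕ → Submodule k (MvPolynomial (Fin 2) k))
    (hC : ∀ n v, v ∈ C n ↔ v ∈ G ∧ v.IsHomogeneous (n * d) ∧ h ∣ v)
    (hdim : ∀ n, n0 ≤ n → Module.finrank k (C n) + e =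
      Module.finrank k (Subalgebra.toSubmodule G ⊓ Hf k (n * d) : Submodule k _)) :
    IsHSMultOfDimOne (G ⧸ I) ((irrel G T).map (Ideal.Quotient.mk I)) e := by
  have hcG : ∀ v ∈ G, ∀ n, homogeneousComponent n v ∈ G ∧ (homogeneousComponent n v ≠ 0 → d ∣ n) := by
    intro v hv n
    rw [hG] at hv ⊢
    exact adjoin_graded hT hv n
  let U : ℕ → Submodule k G := fun n => (Hf k (n * d)).comap G.val.toLinearMap
  have hUmap : ∀ n, (U n).map G.val.toLinearMap = Subalgebra.toSubmodule G ⊓ Hf k (n * d) := by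
    intro n
    ext v
    constructor
    · rintro ⟨u, hu, rfl⟩; exact ⟨u.2, hu⟩
    · rintro ⟨h1, h2⟩; exact ⟨⟨v, h1⟩, h2, rfl⟩
  have hCmap : ∀ n, (U n ⊓ I.restrictScalars k : Submodule k G).map G.val.toLinearMap = C n := by
    intro n
    ext v
    rw [hC]
    constructor
    · rintro ⟨u, hu, rfl⟩; exact ⟨u.2, hu.1, (hI u).mp hu.2⟩
    · rintro ⟨h1, h2, h3⟩; exact ⟨⟨v, h1⟩, ⟨h2, (hI _).mpr h3⟩, rfl⟩
  have hinj : Function.Injective G.val.toLinearMap := Subtype.val_injective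
  have hfr : ∀ P : Submodule k G, Module.finrank k (P.map G.val.toLinearMap) = Module.finrank k P :=
    fun P => (Submodule.equivMapOfInjective _ hinj P).finrank_eq.symm
  refine hs_abs (k := k) (irrel G T) I ?_ U ?_ ?_ ?_ ?_ e n0 ?_
  · intro v
    refine ⟨coeff 0 (v : MvPolynomial (Fin 2) k), ?_⟩
    rw [← pow_one (irrel G T)]
    apply irrel_pow_high hd hT hG
    intro i hi
    rw [one_mul] at hi
    by_cases h0 : i = 0
    · subst h0
      rw [homogeneousComponent_zero]
      simp [MvPolynomial.algebraMap_eq]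
    · have hdi : ¬ d ∣ i := fun h => absurd (Nat.le_of_dvd (by omega) h) (by omega)
      exact not_imp_comm.mp (hcG _ (v - _ : G).2 i).2 hdi
  · intro n
    have : Module.Finite k ((U n).map G.val.toLinearMap) := by
      rw [hUmap]; exact Submodule.finiteDimensional_of_le inf_le_right
    exact Module.Finite.equiv (Submodule.equivMapOfInjective _ hinj (U n)).symm
  · intro n x hx
    apply irrel_pow_high hd hT hG
    intro i hi
    exact (hc_of_hom hx i).trans (if_neg (by omega))
  · intro n u hu
    refine ⟨⟨homogeneousComponent (n * d) (u : MvPolynomial (Fin 2) k), (hcG _ u.2 _).1⟩,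
        homogeneousComponent_isHomogeneous _ _, ?_⟩
    apply irrel_pow_high hd hT hG
    intro i hi
    rw [Subalgebra.coe_sub, map_sub]
    change _ - homogeneousComponent i (homogeneousComponent (n * d) (u : MvPolynomial (Fin 2) k)) = 0
    rw [hc_of_hom (homogeneousComponent_isHomogeneous _ _)]
    split_ifs with h
    · rw [h, sub_self]
    · rw [sub_zero]
      by_contra hne
      obtain ⟨j, rfl⟩ := (hcG _ u.2 i).2 hne
      by_cases hjn : j < n
      · exact hne (irrel_pow_low hT n u hu (by rw [mul_comm]; exact Nat.mul_lt_mul_of_pos_right hjn hd))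
      · have : j < n + 1 := by
          rw [mul_comm] at hi
          exact Nat.lt_of_mul_lt_mul_right hi
        apply h
        rw [show j = n by omega, mul_comm]
  · intro n x hx w hw hw2
    rw [hI] at hw2 ⊢
    have h5 := dvd_hc hh hw2 (n * d)
    rw [Subalgebra.coe_sub, map_sub, irrel_pow_low hT (n + 1) w hw
      (by rw [Nat.succ_mul]; omega), sub_zero] at h5
    rw [hc_of_hom (show (x : MvPolynomial (Fin 2) k).IsHomogeneous (n * d) from hx),
      if_pos rfl] at h5
    exact h5
  · intro n hn
    rw [← hfr, ← hfr, hCmap, hUmap]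
    exact hdim n hn

end hs

set_option linter.style.haveILetI false
set_option linter.unusedVariables false
open MvPolynomial

section dims
variable {k : Type*} [Field k]

lemma dim_le_one {S : Type*} [CommRing S] [Algebra S (MvPolynomial (Fin 2) k)]
    [Algebra.IsIntegral S (MvPolynomial (Fin 2) k)]
    (hinj : Function.Injective (algebraMap S (MvPolynomial (Fin 2) k))) (I : Ideal S)
    (hI : I ≠ ⊥) : ringKrullDim (S ⧸ I) ≤ 1 := by
  have key : ∀ Q₀ Q₁ Q₂ : Ideal S, Q₀.IsPrime → Q₁.IsPrime → Q₂.IsPrime → I ≤ Q₀ → Q₀ < Q₁ →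
      Q₁ < Q₂ → False := by
    intro Q₀ Q₁ Q₂ p0 p1 p2 hI0 h01 h12
    obtain ⟨P₀, -, hP0, e0⟩ := Ideal.exists_ideal_over_prime_of_isIntegral Q₀
      (⊥ : Ideal (MvPolynomial (Fin 2) k)) (by
        rw [Ideal.comap_bot_of_injective _ hinj]; exact bot_le)
    obtain ⟨P₁, h1, hP1, e1⟩ := Ideal.exists_ideal_over_prime_of_isIntegral Q₁ P₀
      (by rw [e0]; exact h01.le)
    obtain ⟨P₂, h2, hP2, e2⟩ := Ideal.exists_ideal_over_prime_of_isIntegral Q₂ P₁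
      (by rw [e1]; exact h12.le)
    have hb : (⊥ : Ideal (MvPolynomial (Fin 2) k)).IsPrime := Ideal.isPrime_bot
    refine dim_B_three (k := k) (P₀ := ⟨⊥, hb⟩) (P₁ := ⟨P₀, hP0⟩) (P₂ := ⟨P₁, hP1⟩)
      (P₃ := ⟨P₂, hP2⟩) ?_ ?_ ?_
    · refine lt_of_le_of_ne (show (⊥ : Ideal _) ≤ P₀ from bot_le) ?_
      intro h
      have h' : (⊥ : Ideal _) = P₀ := congrArg PrimeSpectrum.asIdeal h
      rw [← h', Ideal.comap_bot_of_injective _ hinj] at e0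
      apply hI
      rw [eq_bot_iff, e0]; exact hI0
    · refine lt_of_le_of_ne (show P₀ ≤ P₁ from h1) ?_
      intro h
      have h' : P₀ = P₁ := congrArg PrimeSpectrum.asIdeal h
      rw [h', e1] at e0
      exact h01.ne e0.symm
    · refine lt_of_le_of_ne (show P₁ ≤ P₂ from h2) ?_
      intro h
      have h' : P₁ = P₂ := congrArg PrimeSpectrum.asIdeal h
      rw [h', e2] at e1
      exact h12.ne e1.symm
  rw [ringKrullDim, Order.krullDim]
  refine iSup_le fun p => ?_
  by_contra hlt
  have hlen : 2 ≤ p.length := by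
    by_contra h
    apply hlt
    have : p.length ≤ 1 := by omega
    exact_mod_cast this
  have hlt2 : ∀ a b : PrimeSpectrum (S ⧸ I), a < b →
      a.asIdeal.comap (Ideal.Quotient.mk I) < b.asIdeal.comap (Ideal.Quotient.mk I) := by
    intro a b hab
    refine lt_of_le_of_ne (Ideal.comap_mono hab.le) fun h => ?_
    apply hab.ne
    ext1
    exact Ideal.comap_injective_of_surjective _ Ideal.Quotient.mk_surjective h
  refine key _ _ _ (Ideal.comap_isPrime _ (p ⟨0, by omega⟩).asIdeal)
    (Ideal.comap_isPrime _ (p ⟨1, by omega⟩).asIdeal)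
    (Ideal.comap_isPrime (Ideal.Quotient.mk I) (p ⟨2, by omega⟩).asIdeal) ?_
    (hlt2 _ _ (p.strictMono (by simp [Fin.lt_def])))
    (hlt2 _ _ (p.strictMono (by simp [Fin.lt_def])))
  intro x hx
  rw [Ideal.mem_comap, Ideal.Quotient.eq_zero_iff_mem.mpr hx]
  exact zero_mem _

lemma one_le_dim {S : Type*} [CommRing S] (I m : Ideal S) (hm : I ⊔ m ≠ ⊤) {t : S} (ht : t ∈ m)
    (hnz : Ideal.Quotient.mk I t ∈ nonZeroDivisors (S ⧸ I)) : 1 ≤ ringKrullDim (S ⧸ I) := by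
  have h1 := ringKrullDim_quotient_succ_le_of_nonZeroDivisor hnz
  have hne : Ideal.span {Ideal.Quotient.mk I t} ≠ ⊤ := by
    intro h
    apply hm
    rw [eq_top_iff]
    have h1 : (1 : S ⧸ I) ∈ Ideal.span {Ideal.Quotient.mk I t} := by rw [h]; trivial
    obtain ⟨a, ha⟩ := Ideal.mem_span_singleton'.mp h1
    obtain ⟨b, rfl⟩ := Ideal.Quotient.mk_surjective a
    rw [← map_mul, ← map_one (Ideal.Quotient.mk I), Ideal.Quotient.eq] at ha
    have h2 : b * t - (b * t - 1) ∈ I ⊔ m :=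
      sub_mem (Ideal.mem_sup_right (Ideal.mul_mem_left _ _ ht)) (Ideal.mem_sup_left ha)
    rw [sub_sub_cancel] at h2
    intro x _
    have := Ideal.mul_mem_left _ x h2
    rwa [mul_one] at this
  have : Nontrivial ((S ⧸ I) ⧸ Ideal.span {Ideal.Quotient.mk I t}) :=
    Ideal.Quotient.nontrivial_iff.mpr hne
  have h0 := ringKrullDim_nonneg_of_nontrivial
    (R := (S ⧸ I) ⧸ Ideal.span {Ideal.Quotient.mk I t})
  calc (1 : WithBot ℕ∞) = 0 + 1 := (zero_add 1).symm
    _ ≤ _ := by gcongr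
    _ ≤ _ := h1

lemma mk_nzd {S : Type*} [CommRing S] (I : Ideal S) (t : S) (h : ∀ v, v * t ∈ I → v ∈ I) :
    Ideal.Quotient.mk I t ∈ nonZeroDivisors (S ⧸ I) := by
  rw [mem_nonZeroDivisors_iff_right]
  intro x hx
  obtain ⟨v, rfl⟩ := Ideal.Quotient.mk_surjective x
  rw [← map_mul, Ideal.Quotient.eq_zero_iff_mem] at hx
  rw [Ideal.Quotient.eq_zero_iff_mem]
  exact h v hx

lemma exists_nzd {G : Subalgebra k (MvPolynomial (Fin 2) k)}
    {T : Set (MvPolynomial (Fin 2) k)} (hTG : T ⊆ G) {N : ℕ} (hN : Mxy k ^ N ≤ Ideal.span T)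
    {h : MvPolynomial (Fin 2) k} (hh : h ≠ 0)
    (I : Ideal G) (hI : ∀ v : G, v ∈ I ↔ h ∣ (v : MvPolynomial (Fin 2) k)) :
    ∃ t ∈ irrel G T, Ideal.Quotient.mk I t ∈ nonZeroDivisors (G ⧸ I) := by
  classical
  let F : Finset (MvPolynomial (Fin 2) k) := (UniqueFactorizationMonoid.factors h).toFinset
  have hF : ∀ p ∈ F, Prime p := fun p hp =>
    UniqueFactorizationMonoid.prime_of_factor p (Multiset.mem_toFinset.mp hp)
  let f : MvPolynomial (Fin 2) k → Ideal G := fun p =>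
    (Ideal.span {p}).comap (algebraMap G (MvPolynomial (Fin 2) k))
  have hnot : ¬ ((irrel G T : Set G) ⊆ ⋃ i ∈ (↑F : Set (MvPolynomial (Fin 2) k)), f i) := by
    rw [Ideal.subset_union_prime 0 0]
    · rintro ⟨p, hp, hle⟩
      apply Mxy_not_le_prime (hF p hp) N
      refine hN.trans ?_
      rw [Ideal.span_le]
      intro x hx
      exact hle (show (⟨x, hTG hx⟩ : G) ∈ irrel G T from Ideal.subset_span hx)
    · intro p hp _ _
      have : (Ideal.span {p}).IsPrime :=
        (Ideal.span_singleton_prime (hF p hp).ne_zero).mpr (hF p hp)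
      exact Ideal.comap_isPrime _ _
  rw [Set.not_subset] at hnot
  obtain ⟨t, ht, htn⟩ := hnot
  refine ⟨t, ht, ?_⟩
  have hrel : IsRelPrime h (t : MvPolynomial (Fin 2) k) := by
    refine WfDvdMonoid.isRelPrime_of_no_irreducible_factors (fun h0 => hh h0.1) ?_
    intro z hz hz0 hz1
    obtain ⟨p, hp, hzp⟩ := UniqueFactorizationMonoid.exists_mem_factors_of_dvd hh hz hz0
    apply htn
    refine Set.mem_iUnion₂.mpr ⟨p, Multiset.mem_toFinset.mpr hp, ?_⟩
    exact Ideal.mem_span_singleton.mpr (hzp.symm.dvd.trans hz1)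
  refine mk_nzd I t ?_
  intro v hv
  rw [hI] at hv ⊢
  exact hrel.dvd_of_dvd_mul_right hv

lemma finite_over {G : Subalgebra k (MvPolynomial (Fin 2) k)}
    {T : Set (MvPolynomial (Fin 2) k)} {d : ℕ} (hd : 1 ≤ d) (hT : ∀ f ∈ T, f.IsHomogeneous d)
    (hTG : T ⊆ G) {N : ℕ} (hN : Mxy k ^ N ≤ Ideal.span T) :
    Module.Finite G (MvPolynomial (Fin 2) k) := by
  classical
  choose s hs using fun n => homogeneousSubmodule_fg (Fin 2) k n
  let F : Finset (MvPolynomial (Fin 2) k) := (Finset.range (N + d)).biUnion s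
  let S : Submodule G (MvPolynomial (Fin 2) k) :=
    Submodule.span G (F : Set (MvPolynomial (Fin 2) k))
  have hform : ∀ n, ∀ f : MvPolynomial (Fin 2) k, f.IsHomogeneous n → f ∈ S := by
    intro n
    induction n using Nat.strong_induction_on with
    | _ n ih =>
      intro f hf
      by_cases hn : n < N + d
      · have h1 : f ∈ Submodule.span k (s n : Set (MvPolynomial (Fin 2) k)) := by
          rw [hs]; exact hf
        have h2 : Submodule.span k (s n : Set (MvPolynomial (Fin 2) k)) ≤ S.restrictScalars k := by
          rw [Submodule.span_le]
          intro x hx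
          exact Submodule.subset_span (Finset.mem_coe.mpr (Finset.mem_biUnion.mpr
            ⟨n, Finset.mem_range.mpr hn, hx⟩))
        exact h2 h1
      · obtain ⟨M, rfl⟩ := Nat.exists_eq_add_of_le (show d ≤ n by omega)
        have h1 := mem_span_forms hT hf (hN (Hf_le_Mxy_pow (by omega) hf))
        have h2 : Submodule.span k {u | ∃ w ∈ T, ∃ c : MvPolynomial (Fin 2) k,
            c.IsHomogeneous M ∧ u = w * c} ≤ S.restrictScalars k := by
          rw [Submodule.span_le]
          rintro _ ⟨w, hw, c, hc, rfl⟩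
          exact S.smul_mem (⟨w, hTG hw⟩ : G) (ih M (by omega) c hc)
        exact h2 h1
  refine ⟨⟨F, ?_⟩⟩
  rw [eq_top_iff]
  intro f _
  rw [← sum_hc_of_le f _ (Nat.lt_succ_self _)]
  exact Submodule.sum_mem _ fun i _ => hform i _ (homogeneousComponent_isHomogeneous _ _)

/-- dimension one and depth one -/
lemma dim_cm {G : Subalgebra k (MvPolynomial (Fin 2) k)}
    {T : Set (MvPolynomial (Fin 2) k)} {d : ℕ} (hd : 1 ≤ d) (hT : ∀ f ∈ T, f.IsHomogeneous d)
    (hTG : T ⊆ G) {N : ℕ} (hN : Mxy k ^ N ≤ Ideal.span T)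
    {h : MvPolynomial (Fin 2) k} (hh : h ≠ 0) {m : ℕ} (hm : h.IsHomogeneous (m + 1))
    (I : Ideal G) (hI : ∀ v : G, v ∈ I ↔ h ∣ (v : MvPolynomial (Fin 2) k)) (hI0 : I ≠ ⊥) :
    ringKrullDim (G ⧸ I) = 1 ∧
      ∃ t ∈ irrel G T, Ideal.Quotient.mk I t ∈ nonZeroDivisors (G ⧸ I) := by
  obtain ⟨t, ht, hnz⟩ := exists_nzd hTG hN hh I hI
  refine ⟨le_antisymm ?_ ?_, t, ht, hnz⟩
  · have := finite_over hd hT hTG hN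
    have hInt : Algebra.IsIntegral G (MvPolynomial (Fin 2) k) := inferInstance
    exact dim_le_one (k := k) (Subtype.val_injective) I hI0
  · refine one_le_dim I (irrel G T) ?_ ht hnz
    intro htop
    have h1 : (1 : G) ∈ I ⊔ irrel G T := by rw [htop]; trivial
    obtain ⟨a, ha, b, hb, hab⟩ := Submodule.mem_sup.mp h1
    have hb0 := irrel_pow_low hT 1 b (by rw [pow_one]; exact hb) (i := 0) (by omega)
    have ha0 : homogeneousComponent 0 (a : MvPolynomial (Fin 2) k) = 0 := by
      obtain ⟨w, hw⟩ := (hI a).mp ha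
      rw [hw]
      exact hc_mul_left_lt hm (by omega)
    have h2 : (a : MvPolynomial (Fin 2) k) + b = 1 := by
      rw [← Subalgebra.coe_add, hab, Subalgebra.coe_one]
    have h3 := congrArg (homogeneousComponent 0) h2
    rw [map_add, ha0, hb0, hc_of_hom (isHomogeneous_one _ _), if_pos rfl, add_zero] at h3
    exact zero_ne_one h3

lemma Mxy_pow_le (n : ℕ) :
    Mxy k ^ n ≤ Ideal.span {f : MvPolynomial (Fin 2) k | f.IsHomogeneous n} := by
  induction n with
  | zero =>
    intro x _
    have h1 : (1 : MvPolynomial (Fin 2) k) ∈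
        Ideal.span {f : MvPolynomial (Fin 2) k | f.IsHomogeneous 0} :=
      Ideal.subset_span (isHomogeneous_one _ _)
    simpa using Ideal.mul_mem_left _ x h1
  | succ n ih =>
    rw [pow_succ']
    refine (Ideal.mul_mono_right ih).trans ?_
    rw [Mxy, Ideal.span_mul_span', Ideal.span_le]
    rintro _ ⟨a, ha, b, hb, rfl⟩
    apply Ideal.subset_span
    rcases ha with rfl | rfl
    · exact Hf_mul (isHomogeneous_X k (0 : Fin 2)) hb (by ring)
    · exact Hf_mul (isHomogeneous_X k (1 : Fin 2)) hb (by ring)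

/-- the extended ideal -/
lemma ext_ideal {D : ℕ} (hD : 1 ≤ D) {h : MvPolynomial (Fin 2) k}
    (hh : h.IsHomogeneous (D * (D - 1))) :
    Ideal.span {f : MvPolynomial (Fin 2) k | f ∈ veronese k (D + 1) ∧ h ∣ f} =
      Ideal.span {h} * Mxy k ^ (D - 1) := by
  obtain ⟨E, rfl⟩ : ∃ E, D = E + 1 := ⟨D - 1, by omega⟩
  rw [Nat.add_sub_cancel] at *
  apply le_antisymm
  · rw [Ideal.span_le]
    rintro v ⟨hv, hdv⟩
    rw [SetLike.mem_coe, ← sum_hc_of_le v _ (Nat.lt_succ_self _)]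
    refine Ideal.sum_mem _ fun i _ => ?_
    by_cases h0 : homogeneousComponent i v = 0
    · rw [h0]; exact zero_mem _
    obtain ⟨n, rfl⟩ := mem_veronese_iff.mp hv i h0
    have hdv2 := dvd_hc hh hdv ((E + 1 + 1) * n)
    have hge : (E + 1) * E ≤ (E + 1 + 1) * n := by
      by_contra hlt
      apply h0
      obtain ⟨w, rfl⟩ := hdv
      exact hc_mul_left_lt hh (by omega)
    have hrn : E ≤ n := by
      by_contra hlt
      have : n + 1 ≤ E := by omega
      have h6 : (E + 1 + 1) * (n + 1) ≤ (E + 1 + 1) * E := Nat.mul_le_mul_left _ this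
      nlinarith
    obtain ⟨m, rfl⟩ := Nat.exists_eq_add_of_le hrn
    obtain ⟨w, hw, hvw⟩ := exists_hom_cofactor (n := E + m * (E + 1 + 1)) hh (by
      have := homogeneousComponent_isHomogeneous ((E + 1 + 1) * (E + m)) v
      convert this using 1
      ring) hdv2
    rw [hvw]
    exact Ideal.mul_mem_mul (Ideal.mem_span_singleton_self _) (Hf_le_Mxy_pow (by omega) hw)
  · refine (Ideal.mul_mono_right (Mxy_pow_le E)).trans ?_
    rw [Ideal.span_mul_span', Ideal.span_le]
    rintro _ ⟨a, ha, b, hb, rfl⟩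
    rw [Set.mem_singleton_iff] at ha
    subst ha
    refine Ideal.subset_span ⟨Hf_le_veronese (m := E) (Hf_mul hh hb (by ring)), dvd_mul_right _ _⟩

lemma finrank_condN_eq {D : ℕ} (hD : 1 ≤ D) {g : Fin 3 → MvPolynomial (Fin 2) k}
    {h : MvPolynomial (Fin 2) k} (h0 : h ≠ 0) (hh : h.IsHomogeneous (D * (D - 1)))
    (hiff : ∀ v ∈ veronese k (D + 1),
      ((∀ w ∈ veronese k (D + 1), v * w ∈ coneRing g) ↔ h ∣ v)) (n : ℕ) (hn : D ≤ n) :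
    Module.finrank k (condN g (D + 1) n) + D * (D - 1) = n * (D + 1) + 1 := by
  obtain ⟨m, rfl⟩ := Nat.exists_eq_add_of_le hn
  obtain ⟨E, rfl⟩ : ∃ E, D = E + 1 := ⟨D - 1, by omega⟩
  rw [Nat.add_sub_cancel] at *
  have e1 : (E + 1 + m) * (E + 1 + 1) = (E + 1) * E + (2 * (E + 1) + m * (E + 1 + 1)) := by ring
  have : condN g (E + 1 + 1) (E + 1 + m) =
      (Hf k (2 * (E + 1) + m * (E + 1 + 1))).map (LinearMap.mulLeft k h) := by
    ext v
    rw [mem_condN]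
    constructor
    · rintro ⟨hv, hv2⟩
      obtain ⟨w, hw, rfl⟩ := exists_hom_cofactor hh (e1 ▸ hv)
        ((hiff v (Hf_le_veronese hv)).mp hv2)
      exact ⟨w, hw, rfl⟩
    · rintro ⟨w, hw, rfl⟩
      have hv : (h * w).IsHomogeneous ((E + 1 + m) * (E + 1 + 1)) := Hf_mul hh hw e1.symm
      exact ⟨hv, (hiff _ (Hf_le_veronese hv)).mpr (dvd_mul_right _ _)⟩
  rw [this, finrank_mul h0, finrank_Hf]
  rw [e1]
  ring

end dims

section finalstep
variable {k : Type*} [Field k]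

lemma mem_annih {A V : Type*} [CommRing A] [CommRing V] [Algebra A V] (x : A) :
    x ∈ Module.annihilator A (V ⧸ LinearMap.range (Algebra.linearMap A V)) ↔
      ∀ v : V, ∃ a : A, algebraMap A V a = algebraMap A V x * v := by
  rw [Module.mem_annihilator]
  constructor
  · intro h v
    have h1 := h (Submodule.Quotient.mk v)
    rw [← Submodule.Quotient.mk_smul, Submodule.Quotient.mk_eq_zero] at h1
    obtain ⟨a, ha⟩ := h1
    exact ⟨a, by rw [← Algebra.smul_def]; exact ha⟩
  · intro h q
    obtain ⟨v, rfl⟩ := Submodule.Quotient.mk_surjective _ q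
    rw [← Submodule.Quotient.mk_smul, Submodule.Quotient.mk_eq_zero]
    obtain ⟨a, ha⟩ := h v
    exact ⟨a, by rw [Algebra.smul_def]; exact ha⟩

lemma final_core {D : ℕ} (hD : 2 ≤ D) {g : Fin 3 → MvPolynomial (Fin 2) k}
    (hg : ∀ i, (g i).IsHomogeneous (D + 1)) {N : ℕ}
    (hN : Mxy k ^ N ≤ Ideal.span (Set.range g))
    (hbir : ∀ v ∈ veronese k (D + 1),
      ∃ x ∈ coneRing g, ∃ y ∈ coneRing g, y ≠ 0 ∧ y * v = x)
    (c : Ideal (coneRing g))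
    (hc : ∀ x : coneRing g, x ∈ c ↔ ∀ w ∈ veronese k (D + 1),
      (x : MvPolynomial (Fin 2) k) * w ∈ coneRing g)
    (cV : Ideal (veronese k (D + 1)))
    (hcV : cV = Ideal.span {v : veronese k (D + 1) | ∃ x ∈ c,
      (v : MvPolynomial (Fin 2) k) = (x : MvPolynomial (Fin 2) k)}) :
    (ringKrullDim (coneRing g ⧸ c) = 1 ∧
      (∃ t ∈ Ideal.span (Set.range (coneGen g)),
        Ideal.Quotient.mk c t ∈ nonZeroDivisors (coneRing g ⧸ c)) ∧
      IsHSMultOfDimOne (coneRing g ⧸ c)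
        (Ideal.map (Ideal.Quotient.mk c) (Ideal.span (Set.range (coneGen g))))
        (D.choose 2)) ∧
    (ringKrullDim (veronese k (D + 1) ⧸ cV) = 1 ∧
      (∃ t ∈ Ideal.span {v : veronese k (D + 1) |
          (v : MvPolynomial (Fin 2) k).IsHomogeneous (D + 1)},
        Ideal.Quotient.mk cV t ∈ nonZeroDivisors (veronese k (D + 1) ⧸ cV)) ∧
      IsHSMultOfDimOne (veronese k (D + 1) ⧸ cV)
        (Ideal.map (Ideal.Quotient.mk cV)
          (Ideal.span {v : veronese k (D + 1) |
            (v : MvPolynomial (Fin 2) k).IsHomogeneous (D + 1)}))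
        (D * (D - 1))) ∧
    (∃ cg : MvPolynomial (Fin 2) k, cg.IsHomogeneous (D * (D - 1)) ∧
      Ideal.span {f : MvPolynomial (Fin 2) k | ∃ x ∈ c, f = (x : MvPolynomial (Fin 2) k)} =
        Ideal.span {cg} * Mxy k ^ (D - 1)) := by
  have hD1 : 1 ≤ D := by omega
  obtain ⟨a, haA, ha0, ha⟩ := common_denom hbir
  obtain ⟨dA, dC1, dC2⟩ := dims_any hD1 hg hN ha0 haA ha
  obtain ⟨h, h0, hh, hiff⟩ := key_cond hD1 hg dC1 dC2
  have hle : coneRing g ≤ veronese k (D + 1) := cone_le hg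
  have hcA : ∀ x : coneRing g, x ∈ c ↔ h ∣ (x : MvPolynomial (Fin 2) k) := fun x =>
    (hc x).trans (hiff _ (hle x.2))
  have hVA : ∀ v ∈ veronese k (D + 1), h ∣ v → v ∈ coneRing g := by
    intro v hv hdv
    have := (hiff v hv).mpr hdv 1 (one_mem _)
    rwa [mul_one] at this
  have hcV' : ∀ v : veronese k (D + 1), v ∈ cV ↔ h ∣ (v : MvPolynomial (Fin 2) k) := by
    intro v
    constructor
    · intro hv
      rw [hcV] at hv
      refine Submodule.span_induction (p := fun (v : veronese k (D + 1)) _ =>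
        h ∣ (v : MvPolynomial (Fin 2) k)) ?_ ?_ ?_ ?_ hv
      · rintro w ⟨x, hx, hwx⟩
        rw [hwx]
        exact (hcA x).mp hx
      · exact dvd_zero _
      · intro x y _ _ hx hy
        exact dvd_add hx hy
      · intro r x _ hx
        exact Dvd.dvd.mul_left hx _
    · intro hv
      rw [hcV]
      exact Ideal.subset_span ⟨⟨v, hVA v v.2 hv⟩, (hcA _).mpr hv, rfl⟩
  have hset : {f : MvPolynomial (Fin 2) k | ∃ x ∈ c, f = (x : MvPolynomial (Fin 2) k)} =
      {f : MvPolynomial (Fin 2) k | f ∈ veronese k (D + 1) ∧ h ∣ f} := by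
    ext f
    constructor
    · rintro ⟨x, hx, rfl⟩
      exact ⟨hle x.2, (hcA x).mp hx⟩
    · rintro ⟨h1, h2⟩
      exact ⟨⟨f, hVA f h1 h2⟩, (hcA _).mpr h2, rfl⟩
  obtain ⟨m, hm⟩ : ∃ m, D * (D - 1) = m + 1 :=
    ⟨D * (D - 1) - 1, by
      have : 0 < D * (D - 1) := Nat.mul_pos (by omega) (by omega)
      omega⟩
  -- a nonzero element
  obtain ⟨z, hz0, hzV, hzh⟩ : ∃ z : MvPolynomial (Fin 2) k, z ≠ 0 ∧ z ∈ veronese k (D + 1) ∧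
      h ∣ z := by
    refine ⟨h * X 0 ^ (D - 1), mul_ne_zero h0 (pow_ne_zero _ (X_ne_zero _)),
      Hf_le_veronese (m := D - 1) ?_, dvd_mul_right _ _⟩
    have := hh.mul ((isHomogeneous_X k (0 : Fin 2)).pow (D - 1))
    convert this using 1
    ring
  have hc0 : c ≠ ⊥ := by
    intro hb
    have : (⟨z, hVA z hzV hzh⟩ : coneRing g) ∈ c := (hcA _).mpr hzh
    rw [hb] at this
    exact hz0 (congrArg Subtype.val ((Submodule.mem_bot _).mp this))
  have hcV0 : cV ≠ ⊥ := by
    intro hb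
    have : (⟨z, hzV⟩ : veronese k (D + 1)) ∈ cV := (hcV' _).mpr hzh
    rw [hb] at this
    exact hz0 (congrArg Subtype.val ((Submodule.mem_bot _).mp this))
  have hTg : ∀ f ∈ Set.range g, f.IsHomogeneous (D + 1) := by
    rintro _ ⟨i, rfl⟩
    exact hg i
  have hirr : irrel (coneRing g) (Set.range g) = Ideal.span (Set.range (coneGen g)) := by
    unfold irrel
    congr 1
    ext v
    constructor
    · rintro ⟨i, hi⟩
      exact ⟨i, Subtype.ext hi⟩
    · rintro ⟨i, rfl⟩
      exact ⟨i, rfl⟩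
  have hirrV : irrel (veronese k (D + 1)) {f | f.IsHomogeneous (D + 1)} =
      Ideal.span {v : veronese k (D + 1) |
            (v : MvPolynomial (Fin 2) k).IsHomogeneous (D + 1)} := rfl
  have hNV : Mxy k ^ N ≤ Ideal.span {f : MvPolynomial (Fin 2) k | f.IsHomogeneous (D + 1)} :=
    hN.trans (Ideal.span_mono hTg)
  have hfin := finrank_condN_eq hD1 h0 hh hiff
  have hch : 2 * D.choose 2 = D * (D - 1) := by
    rw [Nat.choose_two_right]
    exact Nat.mul_div_cancel' (Nat.even_mul_pred_self D).two_dvd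
  obtain ⟨A1, A2⟩ := dim_cm (G := coneRing g) (T := Set.range g) (by omega) hTg (Algebra.subset_adjoin) hN h0 (hm ▸ hh) c hcA hc0
  obtain ⟨B1, B2⟩ := dim_cm (G := veronese k (D + 1)) (T := {f | f.IsHomogeneous (D + 1)}) (by omega) (fun f hf => hf)
    (Algebra.subset_adjoin) hNV h0 (hm ▸ hh) cV hcV' hcV0
  have A3 := hs_mult (G := coneRing g) (T := Set.range g) (d := D + 1) (by omega) hTg rfl hh c hcA
    (D.choose 2) D (fun n => condN g (D + 1) n) (by
      intro n v
      rw [mem_condN]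
      constructor
      · rintro ⟨h1, h2⟩
        have h3 := (hiff v (Hf_le_veronese h1)).mp h2
        exact ⟨hVA v (Hf_le_veronese h1) h3, h1, h3⟩
      · rintro ⟨h1, h2, h3⟩
        exact ⟨h2, (hiff v (hle h1)).mpr h3⟩) (by
      intro n hn
      have e1 := dA n hn
      have e2 := hfin n hn
      have e3 : Module.finrank k (Subalgebra.toSubmodule (coneRing g) ⊓ Hf k (n * (D + 1)) :
        Submodule k _) = Module.finrank k (coneN g (D + 1) n) := rfl
      rw [e3]
      omega)
  have B3 := hs_mult (G := veronese k (D + 1)) (T := {f | f.IsHomogeneous (D + 1)}) (d := D + 1)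
    (by omega) (fun f hf => hf) rfl hh cV hcV'
    (D * (D - 1)) D (fun n => condN g (D + 1) n) (by
      intro n v
      rw [mem_condN]
      constructor
      · rintro ⟨h1, h2⟩
        exact ⟨Hf_le_veronese h1, h1, (hiff v (Hf_le_veronese h1)).mp h2⟩
      · rintro ⟨h1, h2, h3⟩
        exact ⟨h2, (hiff v h1).mpr h3⟩) (by
      intro n hn
      have e3 : (Subalgebra.toSubmodule (veronese k (D + 1)) ⊓ Hf k (n * (D + 1)) :
        Submodule k _) = Hf k (n * (D + 1)) :=
        inf_eq_right.mpr fun v hv => Hf_le_veronese hv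
      rw [e3, finrank_Hf]
      exact hfin n hn)
  rw [hirr] at A2 A3
  rw [hirrV] at B2 B3
  refine ⟨⟨A1, A2, A3⟩, ⟨B1, B2, B3⟩, h, hh, ?_⟩
  rw [hset]
  exact ext_ideal hD1 hh

end finalstep

/-- With the conductor setup for a true triple `g` of forms of degree `d` — `B = k[x,y]`, `V`
the `d`-th Veronese subring of `B`, `A = k[g₁,g₂,g₃] ⊆ V` a birational extension with
`(g₁,g₂,g₃)B` of height `2`, and `c = A : V` the conductor (the annihilator of the `A`-module
`V/A`), an ideal of both `A` and `V` —
(a) the ring `A/c` is `1`-dimensional Cohen–Macaulay of multiplicity `binom(d−1, 2)`;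
(b) the ring `V/c` is `1`-dimensional Cohen–Macaulay of multiplicity `(d−1)(d−2)`; and
(c) the extended ideal `cB` equals `c_g · (x,y)^{d−2}` for some homogeneous form `c_g ∈ B` of
degree `(d−1)(d−2)`. -/
theorem stmt16 {k : Type*} [Field k] (d : ℕ) (hd : 3 ≤ d)
    (g : Fin 3 → MvPolynomial (Fin 2) k) (hg : ∀ i, (g i).IsHomogeneous d)
    (hht : idealHeight (Ideal.span (Set.range g)) = 2)
    (hbir : ∀ v ∈ veronese k d,
      ∃ x ∈ coneRing g, ∃ y ∈ coneRing g, y ≠ 0 ∧ y * v = x) :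
    -- `A ⊆ V`, making `V` an `A`-algebra
    letI : Algebra (coneRing g) (veronese k d) :=
      ((Subalgebra.inclusion
        (show coneRing g ≤ veronese k d from
          Algebra.adjoin_le (by rintro x ⟨i, rfl⟩; exact Algebra.subset_adjoin (hg i)))).toRingHom).toAlgebra
    -- the `A`-module `V/A`
    let M := (veronese k d) ⧸
      LinearMap.range (Algebra.linearMap (coneRing g) (veronese k d))
    -- the conductor `c = A : V`, as an ideal of `A`
    let c : Ideal (coneRing g) := Module.annihilator (coneRing g) M
    -- the conductor as an ideal of `V`
    let cV : Ideal (veronese k d) := Ideal.span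
      {v : veronese k d | ∃ x ∈ c, (v : MvPolynomial (Fin 2) k) = (x : MvPolynomial (Fin 2) k)}
    -- the extension `cB` of the conductor to `B`
    let cB : Ideal (MvPolynomial (Fin 2) k) := Ideal.span
      {f : MvPolynomial (Fin 2) k | ∃ x ∈ c, f = (x : MvPolynomial (Fin 2) k)}
    -- (a) `A/c` is 1-dimensional Cohen–Macaulay of multiplicity `(d-1).choose 2`
    (ringKrullDim (coneRing g ⧸ c) = 1 ∧
      (∃ t ∈ Ideal.span (Set.range (coneGen g)),
        Ideal.Quotient.mk c t ∈ nonZeroDivisors (coneRing g ⧸ c)) ∧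
      IsHSMultOfDimOne (coneRing g ⧸ c)
        (Ideal.map (Ideal.Quotient.mk c) (Ideal.span (Set.range (coneGen g))))
        ((d - 1).choose 2)) ∧
    -- (b) `V/c` is 1-dimensional Cohen–Macaulay of multiplicity `(d-1)*(d-2)`
    (ringKrullDim (veronese k d ⧸ cV) = 1 ∧
      (∃ t ∈ Ideal.span {v : veronese k d | (v : MvPolynomial (Fin 2) k).IsHomogeneous d},
        Ideal.Quotient.mk cV t ∈ nonZeroDivisors (veronese k d ⧸ cV)) ∧
      IsHSMultOfDimOne (veronese k d ⧸ cV)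
        (Ideal.map (Ideal.Quotient.mk cV)
          (Ideal.span {v : veronese k d | (v : MvPolynomial (Fin 2) k).IsHomogeneous d}))
        ((d - 1) * (d - 2))) ∧
    -- (c) `cB = c_g · (x,y)^{d-2}` for a form `c_g` of degree `(d-1)(d-2)`
    (∃ cg : MvPolynomial (Fin 2) k, cg.IsHomogeneous ((d - 1) * (d - 2)) ∧
      cB = Ideal.span {cg} *
        (Ideal.span {(X 0 : MvPolynomial (Fin 2) k), X 1}) ^ (d - 2)) := by
  intro M c cV cB
  obtain ⟨D, rfl⟩ : ∃ D, d = D + 1 := ⟨d - 1, by omega⟩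
  obtain ⟨N, hN⟩ := height_step hg hht
  have hle : coneRing g ≤ veronese k (D + 1) := cone_le hg
  letI : Algebra (coneRing g) (veronese k (D + 1)) :=
    ((Subalgebra.inclusion hle).toRingHom).toAlgebra
  have hc : ∀ x : coneRing g, x ∈ c ↔ ∀ w ∈ veronese k (D + 1),
      (x : MvPolynomial (Fin 2) k) * w ∈ coneRing g := by
    intro x
    refine (mem_annih (A := coneRing g) (V := veronese k (D + 1)) x).trans ?_
    constructor
    · intro h w hw
      obtain ⟨a, ha⟩ := h ⟨w, hw⟩
      have h1 : (a : MvPolynomial (Fin 2) k) = (x : MvPolynomial (Fin 2) k) * w :=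
        congrArg Subtype.val ha
      rw [← h1]
      exact a.2
    · intro h v
      exact ⟨⟨_, h v v.2⟩, Subtype.ext rfl⟩
  exact final_core (by omega) hg hN hbir c hc cV rfl
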